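/- arXiv:0809.2427 — 10 statements merged into one kernel-verified Lean document; each statement's English description precedes it below -/
import Mathlib

section
/- Let V be a finite-dimensional complex inner product space and let K ⊆ V be a nonzero finitely generated ℤ[ω]-submodule such that: (i) ⟨x,y⟩ ∈ θℤ[ω] for all x,y ∈ K; (ii) K is generated as a ℤ[ω]-module by its vectors of norm 3; (iii) K is indecomposable, i.e. K is not the sum of two nonzero mutually orthogonal ℤ[ω]-submodules. Then there exist k ∈ {1,2,3,4} and vectors x_1,…,x_k generating K as a ℤ[ω]-module with ⟨x_i,x_i⟩ = 3 for all i, ⟨x_i,x_{i+1}⟩ = −p for 1 ≤ i ≤ k−1, and ⟨x_i,x_j⟩ = 0 whenever j > i+1. (Equivalently, K is isometric to one of the four Eisenstein root lattices E_2^ℰ = A_2, E_4^ℰ = D_4, E_6^ℰ = E_6, E_8^ℰ = E_8.) -/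
/- Classification of indecomposable Eisenstein root lattices:
   any such is spanned by a chain x_1, …, x_k (k ≤ 4) forming the linear
   diagram of A₂ᵉ, D₄ᵉ, E₆ᵉ or E₈ᵉ. -/

open scoped ComplexInnerProductSpace

set_option synthInstance.maxHeartbeats 1000000
set_option maxHeartbeats 1000000

/-- `ω = e^{2πi/3}`. -/
noncomputable def ω : ℂ := Complex.exp (2 * Real.pi * Complex.I / 3)

/-- `θ = ω - ω̄`. -/
noncomputable def θ : ℂ := ω - starRingEnd ℂ ω

/-- `p = 1 - ω̄`. -/
noncomputable def p : ℂ := 1 - starRingEnd ℂ ω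

/-- The ring of Eisenstein integers `ℤ[ω]`, as a subring of `ℂ`. -/
noncomputable def Eis : Subring ℂ := Subring.closure {ω}

/-!
Two norm-3 vectors of `K` have inner product `0`, or `p` times a unit, or are proportional over
`ℤ[ω]`. Start from a single root and enlarge a chain of roots as long as it does not span `K`: by
indecomposability some root `r` outside the span of the chain is not orthogonal to it. Triflections
in the roots of the chain push the first non-orthogonality of `r` along the chain until it occurs
at the last vertex only, and then `r`, rescaled by a unit, prolongs the chain. The pushing works
because a star with three leaves has a degenerate Gram matrix, and the process stops at length four
because a chain of length five also has one; in both cases an explicit null vector shows that the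
last root already lies in the `ℤ[ω]`-span of the others.
-/

open scoped ComplexConjugate

/-! ### Eisenstein integers -/

theorem isPrimitiveRoot_ω : IsPrimitiveRoot ω 3 := by
  simpa [ω] using Complex.isPrimitiveRoot_exp 3 three_ne_zero

theorem ω_ne_zero : ω ≠ 0 := isPrimitiveRoot_ω.ne_zero three_ne_zero

theorem ω_sq : ω ^ 2 = -1 - ω := by
  have hsum := isPrimitiveRoot_ω.geom_sum_eq_zero (by norm_num)
  simp only [Finset.sum_range_succ, Finset.range_zero, Finset.sum_empty] at hsum
  linear_combination hsum

theorem conj_ω : conj ω = -1 - ω := by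
  have hunit : conj ω * ω = 1 := by
    rw [Complex.conj_mul', isPrimitiveRoot_ω.norm'_eq_one three_ne_zero]
    norm_num
  refine mul_right_cancel₀ ω_ne_zero ?_
  linear_combination hunit + ω_sq

theorem p_eq : p = 2 + ω := by
  rw [p, conj_ω]
  ring

theorem conj_p : conj p = 1 - ω := by
  rw [p_eq, map_add, conj_ω, map_ofNat]
  ring

theorem θ_eq : θ = 1 + 2 * ω := by
  rw [θ, conj_ω]
  ring

theorem θ_eq_p_mul : θ = p * (1 + ω) := by
  rw [p_eq, θ_eq]
  linear_combination -ω_sq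

theorem one_sub_ω_mul_p : (1 - ω) * p = 3 := by
  rw [p_eq]
  linear_combination -ω_sq

theorem one_sub_ω_ne_zero : 1 - ω ≠ 0 :=
  left_ne_zero_of_mul (one_sub_ω_mul_p.trans_ne three_ne_zero)

theorem normSq_add_mul_ω (a b : ℝ) : Complex.normSq (a + b * ω) = a ^ 2 - a * b + b ^ 2 := by
  apply Complex.ofReal_injective
  rw [Complex.normSq_eq_conj_mul_self]
  simp only [map_add, map_mul, Complex.conj_ofReal, conj_ω]
  push_cast
  linear_combination -(b : ℂ) ^ 2 * ω_sq

theorem normSq_p : Complex.normSq p = 3 := by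
  have h : p = (2 : ℝ) + (1 : ℝ) * ω := by rw [p_eq]; push_cast; ring
  rw [h, normSq_add_mul_ω]
  norm_num

theorem normSq_θ : Complex.normSq θ = 3 := by
  have h : θ = (1 : ℝ) + (2 : ℝ) * ω := by rw [θ_eq]; push_cast; ring
  rw [h, normSq_add_mul_ω]
  norm_num

theorem ω_mem_Eis : ω ∈ Eis := Subring.subset_closure rfl

theorem one_add_ω_mem_Eis : 1 + ω ∈ Eis := add_mem (one_mem _) ω_mem_Eis

theorem p_mem_Eis : p ∈ Eis := by
  rw [p_eq]
  exact add_mem (ofNat_mem Eis 2) ω_mem_Eis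

theorem intCast_add_mul_ω_mem_Eis (m n : ℤ) : (m + n * ω : ℂ) ∈ Eis :=
  add_mem (intCast_mem _ _) (mul_mem (intCast_mem _ _) ω_mem_Eis)

theorem exists_int_of_mem_Eis {z : ℂ} (hz : z ∈ Eis) : ∃ m n : ℤ, z = m + n * ω := by
  induction hz using Subring.closure_induction with
  | mem x hx => exact ⟨0, 1, by simp [Set.mem_singleton_iff.1 hx]⟩
  | zero => exact ⟨0, 0, by simp⟩
  | one => exact ⟨1, 0, by simp⟩
  | add x y _ _ hx hy =>
    obtain ⟨m, n, rfl⟩ := hx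
    obtain ⟨k, l, rfl⟩ := hy
    exact ⟨m + k, n + l, by push_cast; ring⟩
  | neg x _ hx =>
    obtain ⟨m, n, rfl⟩ := hx
    exact ⟨-m, -n, by push_cast; ring⟩
  | mul x y _ _ hx hy =>
    obtain ⟨m, n, rfl⟩ := hx
    obtain ⟨k, l, rfl⟩ := hy
    refine ⟨m * k - n * l, m * l + n * k - n * l, ?_⟩
    push_cast
    linear_combination (n * l : ℂ) * ω_sq

theorem conj_mem_Eis {z : ℂ} (hz : z ∈ Eis) : conj z ∈ Eis := by
  obtain ⟨m, n, rfl⟩ := exists_int_of_mem_Eis hz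
  convert intCast_add_mul_ω_mem_Eis (m - n) (-n) using 1
  simp only [map_add, map_mul, map_intCast, conj_ω]
  push_cast
  ring

theorem normSq_intCast_add_mul_ω (m n : ℤ) :
    Complex.normSq (m + n * ω) = ((m ^ 2 - m * n + n ^ 2 : ℤ) : ℝ) := by
  exact_mod_cast normSq_add_mul_ω m n

theorem one_le_normSq_of_mem_Eis {z : ℂ} (hz : z ∈ Eis) (hz0 : z ≠ 0) :
    1 ≤ Complex.normSq z := by
  have hpos := Complex.normSq_pos.2 hz0
  obtain ⟨m, n, rfl⟩ := exists_int_of_mem_Eis hz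
  rw [normSq_intCast_add_mul_ω] at hpos ⊢
  exact_mod_cast hpos

-- The residue field of `ℤ[ω]` at `p` is `𝔽₃`, and `m + n ω` reduces to `m + n` there.
theorem normSq_eq_or_p_mul_eq_of_mem_Eis {z : ℂ} (hz : z ∈ Eis) :
    (∃ n : ℤ, Complex.normSq z = 3 * n + 1) ∨ ∃ u ∈ Eis, p * z = 3 * u := by
  obtain ⟨m, n, rfl⟩ := exists_int_of_mem_Eis hz
  rw [normSq_intCast_add_mul_ω]
  have hmod : m + n = 3 * ((m + n) / 3) ∨ m + n = 3 * ((m + n) / 3) + 1 ∨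
      m + n = 3 * ((m + n) / 3) + 2 := by omega
  generalize (m + n) / 3 = b at hmod
  obtain rfl | rfl | rfl : n = 3 * b - m ∨ n = 3 * b + 1 - m ∨ n = 3 * b + 2 - m := by omega
  · refine .inr ⟨_, intCast_add_mul_ω_mem_Eis (m - b) b, ?_⟩
    rw [p_eq]
    push_cast
    linear_combination (3 * b - m : ℂ) * ω_sq
  · exact .inl ⟨3 * b ^ 2 + 2 * b - m * (3 * b + 1 - m), by push_cast; ring⟩
  · exact .inl ⟨3 * b ^ 2 + 4 * b + 1 - m * (3 * b + 2 - m), by push_cast; ring⟩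

theorem eq_ω_mul_or_eq_of_normSq_add_eq {a b : ℂ} (hab : Complex.normSq a = Complex.normSq b)
    (hadd : Complex.normSq (a + b) = Complex.normSq b) :
    a = ω * b ∨ a = -(1 + ω) * b := by
  rcases eq_or_ne b 0 with rfl | hb
  · simpa using hab
  have hab' : a * conj a = b * conj b := by simp only [Complex.mul_conj, hab]
  have hadd' : (a + b) * conj (a + b) = b * conj b := by simp only [Complex.mul_conj, hadd]
  rw [map_add] at hadd'
  have hquad : b * conj b * ((a - ω * b) * (a + (1 + ω) * b)) = 0 := by
    linear_combination a * b * hadd' - b * (a + b) * hab' - b * conj b * b ^ 2 * ω_sq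
  have hb' : b * conj b ≠ 0 := mul_ne_zero hb ((map_ne_zero _).2 hb)
  rcases mul_eq_zero.1 ((mul_eq_zero.1 hquad).resolve_left hb') with h | h
  · exact .inl (sub_eq_zero.1 h)
  · exact .inr (by linear_combination h)

theorem add_eq_zero_or_add_one_add_ω_mul_eq_zero {a b : ℂ}
    (hab : Complex.normSq a = Complex.normSq b)
    (h₁ : a + b = 0 ∨ Complex.normSq (a + b) = Complex.normSq b)
    (h₂ : a + (1 + ω) * b = 0 ∨ Complex.normSq (a + (1 + ω) * b) = Complex.normSq b) :
    a + b = 0 ∨ a + (1 + ω) * b = 0 := by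
  rcases h₁ with h₁ | h₁
  · exact .inl h₁
  rcases h₂ with h₂ | h₂
  · exact .inr h₂
  right
  rcases eq_ω_mul_or_eq_of_normSq_add_eq hab h₁ with ha | ha
  · have hθ : a + (1 + ω) * b = θ * b := by
      rw [ha, θ_eq]
      ring
    rw [hθ, map_mul, normSq_θ] at h₂
    have hb : b = 0 := Complex.normSq_eq_zero.1 (by linarith)
    simp [ha, hb]
  · rw [ha]
    ring

/-! ### Spans over a subring of the scalars -/

section SubringSpan

variable {𝕜 E : Type*} [RCLike 𝕜] [NormedAddCommGroup E] [InnerProductSpace 𝕜 E]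
  {R : Subring 𝕜} {S : Set E}

theorem smul_mem_of_mem_subring {L : Submodule R E} {c : 𝕜} {x : E} (hc : c ∈ R) (hx : x ∈ L) :
    c • x ∈ L :=
  L.smul_mem (⟨c, hc⟩ : R) hx

theorem inner_eq_zero_of_mem_span {x r : E} (hS : ∀ s ∈ S, inner 𝕜 s r = 0)
    (hx : x ∈ Submodule.span R S) : inner 𝕜 x r = 0 := by
  have hle : Submodule.span R S ≤ (Submodule.span 𝕜 {r})ᗮ.restrictScalars R :=
    Submodule.span_le.2 fun s hs => Submodule.mem_orthogonal_singleton_iff_inner_left.2 (hS s hs)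
  exact Submodule.mem_orthogonal_singleton_iff_inner_left.1 (hle hx)

theorem mem_span_of_null_add {r v : E} (hv : v ∈ Submodule.span R S)
    (hS : ∀ s ∈ S, inner 𝕜 s (r + v) = 0) (hr : inner 𝕜 r (r + v) = 0) :
    r ∈ Submodule.span R S := by
  have hnull : r + v = 0 := by
    rw [← inner_self_eq_zero (𝕜 := 𝕜), inner_add_left, hr, inner_eq_zero_of_mem_span hS hv,
      add_zero]
  exact add_eq_zero_iff_eq_neg.1 hnull ▸ neg_mem hv

end SubringSpan

/-! ### Roots -/

section Roots

variable {V : Type*} [NormedAddCommGroup V] [InnerProductSpace ℂ V]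

/-- The lattice condition of Eisenstein root lattices: all inner products lie in `θ ℤ[ω]`. -/
def IsThetaIntegral (K : Submodule Eis V) : Prop :=
  ∀ x ∈ K, ∀ y ∈ K, ∃ a ∈ Eis, ⟪x, y⟫ = θ * a

/-- `K` is not the sum of two nonzero mutually orthogonal submodules. -/
def IsIndecomposable (K : Submodule Eis V) : Prop :=
  ¬ ∃ K₁ K₂ : Submodule Eis V, K₁ ≠ ⊥ ∧ K₂ ≠ ⊥ ∧
    (∀ x ∈ K₁, ∀ y ∈ K₂, ⟪x, y⟫ = 0) ∧ K₁ ⊔ K₂ = K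

/-- The roots of `K`, i.e. its vectors of norm `3`, where the norm of `x` is `⟪x, x⟫`. -/
def latticeRoots (K : Submodule Eis V) : Set V := {x | x ∈ K ∧ ⟪x, x⟫ = 3}

/-- The complex reflection of order three in a vector `y` with `⟪y, y⟫ = 3`: it multiplies `y` by
`ω` and fixes the orthogonal complement of `y`. -/
noncomputable def triflection (y r : V) : V := r - ((1 - ω) * ⟪y, r⟫ / 3) • y

variable {K L : Submodule Eis V} {x y z r : V}

theorem inner_swap_of_eq_neg_p (h : ⟪x, y⟫ = -p) : ⟪y, x⟫ = -(1 - ω) := by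
  rw [← inner_conj_symm, h, map_neg, conj_p]

theorem IsThetaIntegral.exists_inner_eq_p_mul (hK : IsThetaIntegral K) (hx : x ∈ K) (hy : y ∈ K) :
    ∃ b ∈ Eis, ⟪x, y⟫ = p * b := by
  obtain ⟨a, ha, hxy⟩ := hK x hx y hy
  exact ⟨(1 + ω) * a, mul_mem one_add_ω_mem_Eis ha, by rw [hxy, θ_eq_p_mul, mul_assoc]⟩

theorem norm_sq_sub_smul_of_inner_eq {c : ℂ} (hx : ⟪x, x⟫ = 3) (hr : ⟪r, r⟫ = 3)
    (hxr : ⟪x, r⟫ = 3 * c) : ‖r - c • x‖ ^ 2 = 3 - 3 * Complex.normSq c := by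
  have hrx : ⟪r, x⟫ = 3 * conj c := by rw [← inner_conj_symm, hxr, map_mul, map_ofNat]
  apply Complex.ofReal_injective
  have hself := inner_self_eq_norm_sq_to_K (𝕜 := ℂ) (r - c • x)
  push_cast at hself ⊢
  rw [← Complex.mul_conj, ← RCLike.ofReal_eq_complex_ofReal, ← hself]
  simp only [inner_sub_left, inner_sub_right, inner_smul_left, inner_smul_right, hx, hr, hxr, hrx]
  ring

theorem inner_eq_zero_or_unit_or_smul {b : ℂ} (hx : ⟪x, x⟫ = 3) (hr : ⟪r, r⟫ = 3) (hb : b ∈ Eis)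
    (hxr : ⟪x, r⟫ = p * b) :
    ⟪x, r⟫ = 0 ∨ Complex.normSq b = 1 ∨ ∃ u ∈ Eis, r = u • x := by
  rcases normSq_eq_or_p_mul_eq_of_mem_Eis hb with ⟨n, hn⟩ | ⟨u, hu, hub⟩
  · have hnorm := norm_sq_sub_smul_of_inner_eq (c := p * b / 3) hx hr (by rw [hxr]; ring)
    rw [map_div₀, map_mul, normSq_p, Complex.normSq_ofNat, hn] at hnorm
    have hle : (3 * n + 1 : ℝ) ≤ 3 := by nlinarith [sq_nonneg ‖r - (p * b / 3) • x‖]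
    have hge : (0 : ℝ) ≤ 3 * n + 1 := hn ▸ Complex.normSq_nonneg b
    have hn0 : n = 0 := by
      have hlt : n < 1 := by exact_mod_cast (by linarith : (n : ℝ) < 1)
      have hgt : -1 < n := by exact_mod_cast (by linarith : (-1 : ℝ) < n)
      omega
    simp [hn, hn0]
  · rw [hub] at hxr
    by_cases hu0 : u = 0
    · simp [hxr, hu0]
    have hnorm := norm_sq_sub_smul_of_inner_eq hx hr hxr
    have hzero : r - u • x = 0 := by
      rw [← norm_eq_zero, ← sq_eq_zero_iff]
      nlinarith [one_le_normSq_of_mem_Eis hu hu0, sq_nonneg ‖r - u • x‖]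
    exact .inr (.inr ⟨u, hu, sub_eq_zero.1 hzero⟩)

theorem exists_unit_inner_eq (hK : IsThetaIntegral K) (hr : r ∈ latticeRoots K \ L)
    (hx : x ∈ latticeRoots K ∩ L) (hxr : ⟪x, r⟫ ≠ 0) :
    ∃ b ∈ Eis, Complex.normSq b = 1 ∧ ⟪x, r⟫ = p * b := by
  obtain ⟨b, hb, hxb⟩ := hK.exists_inner_eq_p_mul hx.1.1 hr.1.1
  refine ⟨b, hb, ?_, hxb⟩
  rcases inner_eq_zero_or_unit_or_smul hx.1.2 hr.1.2 hb hxb with h0 | h1 | ⟨u, hu, rfl⟩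
  · exact absurd h0 hxr
  · exact h1
  · exact absurd (smul_mem_of_mem_subring hu hx.2) hr.2

theorem inner_eq_zero_or_normSq_eq_three (hK : IsThetaIntegral K) (hr : r ∈ latticeRoots K \ L)
    (hx : x ∈ latticeRoots K ∩ L) : ⟪x, r⟫ = 0 ∨ Complex.normSq ⟪x, r⟫ = 3 := by
  refine or_iff_not_imp_left.2 fun hxr => ?_
  obtain ⟨b, -, hb1, hxb⟩ := exists_unit_inner_eq hK hr hx hxr
  rw [hxb, map_mul, normSq_p, hb1, mul_one]

theorem exists_smul_inner_eq_neg_p (hK : IsThetaIntegral K) (hr : r ∈ latticeRoots K \ L)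
    (hx : x ∈ latticeRoots K ∩ L) (hxr : ⟪x, r⟫ ≠ 0) :
    ∃ c : ℂ, c • r ∈ latticeRoots K \ L ∧ ⟪x, c • r⟫ = -p := by
  obtain ⟨b, hb, hb1, hxb⟩ := exists_unit_inner_eq hK hr hx hxr
  have hunit : b * conj b = 1 := by rw [Complex.mul_conj, hb1, Complex.ofReal_one]
  refine ⟨-conj b, ⟨⟨smul_mem_of_mem_subring (neg_mem (conj_mem_Eis hb)) hr.1.1, ?_⟩,
    fun hL => ?_⟩, ?_⟩
  · rw [inner_smul_left, inner_smul_right, hr.1.2, map_neg, Complex.conj_conj]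
    linear_combination 3 * hunit
  · have hrL := smul_mem_of_mem_subring (neg_mem hb) hL
    rw [smul_smul, neg_mul_neg, hunit, one_smul] at hrL
    exact hr.2 hrL
  · rw [inner_smul_right, hxb]
    linear_combination -p * hunit

/-! ### Triflections -/

theorem inner_triflection_right (z y r : V) :
    ⟪z, triflection y r⟫ = ⟪z, r⟫ - (1 - ω) * ⟪y, r⟫ / 3 * ⟪z, y⟫ := by
  rw [triflection, inner_sub_right, inner_smul_right]

theorem inner_triflection_of_orthogonal (hzy : ⟪z, y⟫ = 0) : ⟪z, triflection y r⟫ = ⟪z, r⟫ := by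
  rw [inner_triflection_right, hzy, mul_zero, sub_zero]

theorem inner_self_triflection (hy : ⟪y, y⟫ = 3) : ⟪y, triflection y r⟫ = ω * ⟪y, r⟫ := by
  rw [inner_triflection_right, hy]
  ring

theorem inner_triflection_of_eq_neg_p (hxy : ⟪x, y⟫ = -p) :
    ⟪x, triflection y r⟫ = ⟪x, r⟫ + ⟪y, r⟫ := by
  rw [inner_triflection_right, hxy]
  linear_combination ⟪y, r⟫ / 3 * one_sub_ω_mul_p

theorem inner_triflection_triflection (hy : ⟪y, y⟫ = 3) :
    ⟪triflection y r, triflection y r⟫ = ⟪r, r⟫ := by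
  have hry : conj ⟪y, r⟫ = ⟪r, y⟫ := inner_conj_symm r y
  nth_rw 1 [triflection]
  rw [inner_sub_left, inner_smul_left, inner_self_triflection hy, inner_triflection_right]
  simp only [map_div₀, map_mul, map_sub, map_one, map_ofNat, conj_ω, hry]
  linear_combination -⟪y, r⟫ * ⟪r, y⟫ / 3 * ω_sq

theorem triflection_mem (hK : IsThetaIntegral K) (hy : y ∈ latticeRoots K ∩ L)
    (hr : r ∈ latticeRoots K \ L) : triflection y r ∈ latticeRoots K \ L := by
  obtain ⟨b, hb, hyr⟩ := hK.exists_inner_eq_p_mul hy.1.1 hr.1.1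
  have htri : triflection y r = r - b • y := by
    rw [triflection, hyr, ← mul_assoc, one_sub_ω_mul_p, mul_div_cancel_left₀ b three_ne_zero]
  refine ⟨⟨?_, (inner_triflection_triflection hy.1.2).trans hr.1.2⟩, fun hL => hr.2 ?_⟩
  · exact htri ▸ sub_mem hr.1.1 (smul_mem_of_mem_subring hb hy.1.1)
  · exact (L.sub_mem_iff_left (smul_mem_of_mem_subring hb hy.2)).1 (htri ▸ hL)

theorem exists_outside_root_orthogonal (hK : IsThetaIntegral K) (hx : x ∈ latticeRoots K ∩ L)
    (hy : y ∈ latticeRoots K ∩ L) (hxy : ⟪x, y⟫ = -p) (hr : r ∈ latticeRoots K \ L)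
    (hxr : ⟪x, r⟫ ≠ 0) (hyr : ⟪y, r⟫ ≠ 0) :
    ∃ s ∈ latticeRoots K \ L, ⟪x, s⟫ = 0 ∧ ⟪y, s⟫ ≠ 0 ∧ ∀ z, ⟪z, y⟫ = 0 → ⟪z, s⟫ = ⟪z, r⟫ := by
  set r₁ := triflection y r
  set r₂ := triflection y r₁
  have hr₁ : r₁ ∈ latticeRoots K \ L := triflection_mem hK hy hr
  have hr₂ : r₂ ∈ latticeRoots K \ L := triflection_mem hK hy hr₁
  have hyr₁ : ⟪y, r₁⟫ = ω * ⟪y, r⟫ := inner_self_triflection hy.1.2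
  have hyr₂ : ⟪y, r₂⟫ = ω * ⟪y, r₁⟫ := inner_self_triflection hy.1.2
  have hxr₁ : ⟪x, r₁⟫ = ⟪x, r⟫ + ⟪y, r⟫ := inner_triflection_of_eq_neg_p hxy
  have hxr₂ : ⟪x, r₂⟫ = ⟪x, r⟫ + (1 + ω) * ⟪y, r⟫ := by
    rw [inner_triflection_of_eq_neg_p hxy, hxr₁, hyr₁]
    ring
  have hyr₁_ne : ⟪y, r₁⟫ ≠ 0 := hyr₁ ▸ mul_ne_zero ω_ne_zero hyr
  have hyr₂_ne : ⟪y, r₂⟫ ≠ 0 := hyr₂ ▸ mul_ne_zero ω_ne_zero hyr₁_ne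
  have hx3 := (inner_eq_zero_or_normSq_eq_three hK hr hx).resolve_left hxr
  have hy3 := (inner_eq_zero_or_normSq_eq_three hK hr hy).resolve_left hyr
  have hvanish : ⟪x, r₁⟫ = 0 ∨ ⟪x, r₂⟫ = 0 := by
    have h₁ := inner_eq_zero_or_normSq_eq_three hK hr₁ hx
    have h₂ := inner_eq_zero_or_normSq_eq_three hK hr₂ hx
    rw [hxr₁, ← hy3] at h₁
    rw [hxr₂, ← hy3] at h₂
    rw [hxr₁, hxr₂]
    exact add_eq_zero_or_add_one_add_ω_mul_eq_zero (hx3.trans hy3.symm) h₁ h₂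
  have hzr₁ : ∀ z, ⟪z, y⟫ = 0 → ⟪z, r₁⟫ = ⟪z, r⟫ := fun _ => inner_triflection_of_orthogonal
  rcases hvanish with h | h
  · exact ⟨r₁, hr₁, h, hyr₁_ne, hzr₁⟩
  · exact ⟨r₂, hr₂, h, hyr₂_ne, fun z hz => (inner_triflection_of_orthogonal hz).trans (hzr₁ z hz)⟩

/-! ### Degenerate diagrams -/

theorem mem_span_of_star (hx : ⟪x, x⟫ = 3) (hy : ⟪y, y⟫ = 3) (hz : ⟪z, z⟫ = 3) (hr : ⟪r, r⟫ = 3)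
    (hxy : ⟪x, y⟫ = -p) (hyz : ⟪y, z⟫ = -p) (hyr : ⟪y, r⟫ = -p)
    (hxz : ⟪x, z⟫ = 0) (hxr : ⟪x, r⟫ = 0) (hzr : ⟪z, r⟫ = 0) :
    r ∈ Submodule.span Eis {x, y, z} := by
  have hx_mem : x ∈ Submodule.span Eis {x, y, z} := Submodule.subset_span (by simp)
  have hy_mem : y ∈ Submodule.span Eis {x, y, z} := Submodule.subset_span (by simp)
  have hz_mem : z ∈ Submodule.span Eis {x, y, z} := Submodule.subset_span (by simp)
  have hv : p • y + (1 + ω) • x + z ∈ Submodule.span Eis {x, y, z} :=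
    add_mem (add_mem (smul_mem_of_mem_subring p_mem_Eis hy_mem)
      (smul_mem_of_mem_subring one_add_ω_mem_Eis hx_mem)) hz_mem
  refine mem_span_of_null_add hv ?_ ?_
  · rintro s (rfl | rfl | rfl) <;> simp only [inner_add_right, inner_smul_right]
    · rw [hx, hxy, hxz, hxr, p_eq]
      linear_combination -ω_sq
    · rw [inner_swap_of_eq_neg_p hxy, hy, hyz, hyr, p_eq]
      linear_combination ω_sq
    · rw [inner_eq_zero_symm.1 hxz, inner_swap_of_eq_neg_p hyz, hz, hzr]
      linear_combination -one_sub_ω_mul_p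
  · simp only [inner_add_right, inner_smul_right]
    rw [hr, inner_swap_of_eq_neg_p hyr, inner_eq_zero_symm.1 hxr, inner_eq_zero_symm.1 hzr]
    linear_combination -one_sub_ω_mul_p

theorem inner_ne_zero_of_star (hK : IsThetaIntegral K) (hx : x ∈ latticeRoots K ∩ L)
    (hy : y ∈ latticeRoots K ∩ L) (hz : z ∈ latticeRoots K ∩ L) (hxy : ⟪x, y⟫ = -p)
    (hyz : ⟪y, z⟫ = -p) (hxz : ⟪x, z⟫ = 0) (hr : r ∈ latticeRoots K \ L) (hxr : ⟪x, r⟫ = 0)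
    (hyr : ⟪y, r⟫ ≠ 0) : ⟪z, r⟫ ≠ 0 := by
  intro hzr
  obtain ⟨c, hcr, hycr⟩ := exists_smul_inner_eq_neg_p hK hr hy hyr
  have hmem : c • r ∈ Submodule.span Eis {x, y, z} :=
    mem_span_of_star hx.1.2 hy.1.2 hz.1.2 hcr.1.2 hxy hyz hycr hxz
      (by rw [inner_smul_right, hxr, mul_zero]) (by rw [inner_smul_right, hzr, mul_zero])
  have hle : Submodule.span Eis {x, y, z} ≤ L :=
    Submodule.span_le.2 (by rintro s (rfl | rfl | rfl); exacts [hx.2, hy.2, hz.2])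
  exact hcr.2 (hle hmem)

/-! ### Chains of roots -/

/-- A family of roots whose diagram is a path: consecutive members have inner product `-p`, all
other pairs are orthogonal. Only pairs `i ≤ j` are recorded; the rest follows by conjugation. -/
structure IsRootChain {k : ℕ} (x : Fin k → V) : Prop where
  inner_self : ∀ i, ⟪x i, x i⟫ = 3
  inner_next : ∀ (i : Fin k) (h : (i : ℕ) + 1 < k), ⟪x i, x ⟨(i : ℕ) + 1, h⟩⟫ = -p
  inner_far : ∀ i j : Fin k, (i : ℕ) + 1 < (j : ℕ) → ⟪x i, x j⟫ = 0

namespace IsRootChain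

variable {k : ℕ}

theorem inner_castSucc_succ {x : Fin (k + 1) → V} (hx : IsRootChain x) (i : Fin k) :
    ⟪x i.castSucc, x i.succ⟫ = -p :=
  hx.inner_next i.castSucc (Nat.succ_lt_succ i.isLt)

theorem inner_eq {x : Fin k → V} (hx : IsRootChain x) (i j : Fin k) :
    ⟪x i, x j⟫ = if i = j then 3 else if (i : ℕ) + 1 = j then -p
      else if (j : ℕ) + 1 = i then -(1 - ω) else 0 := by
  obtain ⟨i, hi⟩ := i
  obtain ⟨j, hj⟩ := j
  split_ifs with hij hnext hprev
  · exact hij ▸ hx.inner_self _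
  · obtain rfl : i + 1 = j := hnext
    exact hx.inner_next ⟨i, hi⟩ hj
  · obtain rfl : j + 1 = i := hprev
    exact inner_swap_of_eq_neg_p (hx.inner_next ⟨j, hj⟩ hi)
  · simp only [Fin.mk.injEq] at hij hnext hprev
    rcases lt_or_gt_of_ne hij with hlt | hgt
    · exact hx.inner_far _ _ (by simp only; omega)
    · exact inner_eq_zero_symm.1 (hx.inner_far _ _ (by simp only; omega))

theorem singleton (hx : ⟪x, x⟫ = 3) : IsRootChain fun _ : Fin 1 => x where
  inner_self _ := hx
  inner_next _ h := by omega
  inner_far _ _ h := by omega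

theorem of_init {x : Fin (k + 2) → V} (hx : IsRootChain (Fin.init x : Fin (k + 1) → V))
    (hself : ⟪x (Fin.last _), x (Fin.last _)⟫ = 3)
    (hfar : ∀ i : Fin k, ⟪x i.castSucc.castSucc, x (Fin.last _)⟫ = 0)
    (hnext : ⟪x (Fin.last k).castSucc, x (Fin.last _)⟫ = -p) : IsRootChain x where
  inner_self := Fin.lastCases hself hx.inner_self
  inner_next i h := by
    induction i using Fin.lastCases with
    | last => exact absurd h (lt_irrefl _)
    | cast i =>
      induction i using Fin.lastCases with
      | last => exact hnext
      | cast i => exact hx.inner_castSucc_succ i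
  inner_far i j h := by
    obtain ⟨i, rfl⟩ := Fin.exists_castSucc_eq.2 (Fin.ne_last_of_lt (Nat.lt_of_succ_lt h))
    induction j using Fin.lastCases with
    | last =>
      have hi : i < Fin.last k := Nat.lt_of_succ_lt_succ h
      obtain ⟨i, rfl⟩ := Fin.exists_castSucc_eq.2 hi.ne
      exact hfar i
    | cast j => exact hx.inner_far i j h

theorem last_mem_span_init {x : Fin 5 → V} (hx : IsRootChain x) :
    x (Fin.last 4) ∈ Submodule.span Eis (Set.range (Fin.init x : Fin 4 → V)) := by
  have hmem (i : Fin 4) : x i.castSucc ∈ Submodule.span Eis (Set.range (Fin.init x : Fin 4 → V)) :=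
    Submodule.subset_span ⟨i, rfl⟩
  have hv : ω • x 0 + (p * (1 + ω)) • x 1 + (2 * (1 + ω)) • x 2 + p • x 3 ∈
      Submodule.span Eis (Set.range (Fin.init x : Fin 4 → V)) :=
    add_mem (add_mem (add_mem (smul_mem_of_mem_subring ω_mem_Eis (hmem 0))
      (smul_mem_of_mem_subring (mul_mem p_mem_Eis one_add_ω_mem_Eis) (hmem 1)))
      (smul_mem_of_mem_subring (mul_mem (ofNat_mem Eis 2) one_add_ω_mem_Eis) (hmem 2)))
      (smul_mem_of_mem_subring p_mem_Eis (hmem 3))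
  have horth (i : Fin 5) : ⟪x i, x (Fin.last 4) +
      (ω • x 0 + (p * (1 + ω)) • x 1 + (2 * (1 + ω)) • x 2 + p • x 3)⟫ = 0 := by
    simp only [inner_add_right, inner_smul_right, hx.inner_eq, p_eq]
    fin_cases i <;> simp only [Fin.isValue, Fin.zero_eta, Fin.mk_one, Fin.reduceFinMk,
      Fin.reduceLast, Fin.reduceEq, Fin.coe_ofNat_eq_mod, Nat.reduceMod, Nat.reduceAdd,
      Nat.reduceEqDiff, ↓reduceIte]
    · linear_combination (-4 - ω) * ω_sq
    · linear_combination 2 * ω_sq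
    · linear_combination ω * ω_sq
    · linear_combination 2 * ω_sq
    · linear_combination ω_sq
  refine mem_span_of_null_add hv ?_ (horth _)
  rintro _ ⟨i, rfl⟩
  exact horth i.castSucc

theorem exists_inner_next_ne_zero {x : Fin (k + 1) → V} (hx : IsRootChain x)
    (hK : IsThetaIntegral K) (hxKL : ∀ i, x i ∈ latticeRoots K ∩ L) (i : Fin k)
    (hr : r ∈ latticeRoots K \ L) (hbefore : ∀ j < i.castSucc, ⟪x j, r⟫ = 0)
    (hi : ⟪x i.castSucc, r⟫ ≠ 0) :
    ∃ s ∈ latticeRoots K \ L, (∀ j < i.castSucc, ⟪x j, s⟫ = 0) ∧ ⟪x i.castSucc, s⟫ ≠ 0 ∧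
      ⟪x i.succ, s⟫ ≠ 0 := by
  by_cases hnext : ⟪x i.succ, r⟫ = 0
  swap
  · exact ⟨r, hr, hbefore, hi, hnext⟩
  obtain _ | k := k
  · exact i.elim0
  induction i using Fin.cases with
  | zero =>
    refine ⟨triflection (x 0) r, triflection_mem hK (hxKL 0) hr, fun j hj => ?_, ?_, ?_⟩
    · exact absurd hj (Fin.not_lt_zero j)
    · rw [Fin.castSucc_zero] at hi ⊢
      rw [inner_self_triflection (hx.inner_self 0)]
      exact mul_ne_zero ω_ne_zero hi
    · have hprev : ⟪x (Fin.succ 0), x 0⟫ = -(1 - ω) :=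
        inner_swap_of_eq_neg_p (hx.inner_castSucc_succ 0)
      rw [inner_triflection_right, hnext, hprev, zero_sub, neg_ne_zero]
      exact mul_ne_zero (div_ne_zero (mul_ne_zero one_sub_ω_ne_zero hi) three_ne_zero)
        (neg_ne_zero.2 one_sub_ω_ne_zero)
  | succ i =>
    exact absurd hnext <| inner_ne_zero_of_star hK (hxKL i.castSucc.castSucc) (hxKL i.succ.castSucc)
      (hxKL i.succ.succ) (hx.inner_castSucc_succ i.castSucc) (hx.inner_castSucc_succ i.succ)
      (hx.inner_far _ _ (Nat.lt_succ_self _)) hr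
      (hbefore _ (Fin.castSucc_lt_castSucc_iff.2 i.castSucc_lt_succ)) hi

theorem exists_push_right {x : Fin (k + 1) → V} (hx : IsRootChain x)
    (hK : IsThetaIntegral K) (hxKL : ∀ i, x i ∈ latticeRoots K ∩ L) (i : Fin k)
    (hr : r ∈ latticeRoots K \ L) (hbefore : ∀ j < i.castSucc, ⟪x j, r⟫ = 0)
    (hi : ⟪x i.castSucc, r⟫ ≠ 0) :
    ∃ s ∈ latticeRoots K \ L, (∀ j < i.succ, ⟪x j, s⟫ = 0) ∧ ⟪x i.succ, s⟫ ≠ 0 := by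
  obtain ⟨t, ht, htbefore, hti, htnext⟩ := hx.exists_inner_next_ne_zero hK hxKL i hr hbefore hi
  obtain ⟨s, hs, hsi, hsnext, hseq⟩ := exists_outside_root_orthogonal hK (hxKL _) (hxKL _)
    (hx.inner_castSucc_succ i) ht hti htnext
  refine ⟨s, hs, fun j hj => ?_, hsnext⟩
  rcases (Fin.le_castSucc_iff.2 hj).lt_or_eq with hlt | rfl
  · rw [hseq _ (hx.inner_far _ _ (Nat.succ_lt_succ hlt)), htbefore j hlt]
  · exact hsi

theorem exists_orthogonal_init {x : Fin (k + 1) → V} (hx : IsRootChain x)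
    (hK : IsThetaIntegral K) (hxKL : ∀ i, x i ∈ latticeRoots K ∩ L)
    (hr : r ∈ latticeRoots K \ L) (hne : ∃ i, ⟪x i, r⟫ ≠ 0) :
    ∃ s ∈ latticeRoots K \ L, (∀ i : Fin k, ⟪x i.castSucc, s⟫ = 0) ∧
      ⟪x (Fin.last k), s⟫ ≠ 0 := by
  have push : ∀ i, ∀ t ∈ latticeRoots K \ L, (∀ j < i, ⟪x j, t⟫ = 0) → ⟪x i, t⟫ ≠ 0 →
      ∃ s ∈ latticeRoots K \ L, (∀ i : Fin k, ⟪x i.castSucc, s⟫ = 0) ∧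
        ⟪x (Fin.last k), s⟫ ≠ 0 := by
    intro i
    induction i using Fin.reverseInduction with
    | last => exact fun t ht hbefore hlast => ⟨t, ht, fun i => hbefore _ i.castSucc_lt_last, hlast⟩
    | cast i ih =>
      intro t ht hbefore hi
      obtain ⟨s, hs, hsbefore, hsi⟩ := hx.exists_push_right hK hxKL i ht hbefore hi
      exact ih s hs hsbefore hsi
  obtain ⟨i, hi, hmin⟩ := WellFounded.has_min wellFounded_lt {i | ⟪x i, r⟫ ≠ 0} hne
  exact push i r hr (fun j hj => not_not.1 fun h => hmin j h hj) hi

theorem exists_snoc {x : Fin (k + 1) → V} (hx : IsRootChain x)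
    (hK : IsThetaIntegral K) (hxKL : ∀ i, x i ∈ latticeRoots K ∩ L)
    (hr : r ∈ latticeRoots K \ L) (hne : ∃ i, ⟪x i, r⟫ ≠ 0) :
    ∃ s ∈ latticeRoots K \ L, IsRootChain (Fin.snoc x s : Fin (k + 2) → V) := by
  obtain ⟨t, ht, hinit, hlast⟩ := hx.exists_orthogonal_init hK hxKL hr hne
  obtain ⟨c, hct, hlast'⟩ := exists_smul_inner_eq_neg_p hK ht (hxKL _) hlast
  refine ⟨c • t, hct, of_init (by rwa [Fin.init_snoc]) ?_ (fun i => ?_) ?_⟩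
  · simpa using hct.1.2
  · simp only [Fin.snoc_castSucc, Fin.snoc_last, inner_smul_right, hinit, mul_zero]
  · simpa only [Fin.snoc_castSucc, Fin.snoc_last] using hlast'

end IsRootChain

/-! ### Indecomposable lattices generated by roots -/

theorem IsIndecomposable.exists_outside_root_inner_ne_zero (hindec : IsIndecomposable K)
    (hgen : K = Submodule.span Eis (latticeRoots K)) (hL : L ≠ ⊥) (hLK : L < K) :
    ∃ r ∈ latticeRoots K \ L, ∃ x ∈ L, ⟪x, r⟫ ≠ 0 := by
  by_contra! horth
  have hsup : L ⊔ Submodule.span Eis (latticeRoots K \ L) = K := by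
    refine le_antisymm (sup_le hLK.le (Submodule.span_le.2 fun r hr => hr.1.1)) ?_
    nth_rw 1 [hgen]
    refine Submodule.span_le.2 fun r hr => ?_
    by_cases hrL : r ∈ L
    · exact Submodule.mem_sup_left hrL
    · exact Submodule.mem_sup_right (Submodule.subset_span ⟨hr, hrL⟩)
  refine hindec ⟨L, _, hL, fun hbot => ?_, fun x hx y hy => ?_, hsup⟩
  · rw [hbot, sup_bot_eq] at hsup
    exact hLK.ne hsup
  · exact inner_eq_zero_symm.1
      (inner_eq_zero_of_mem_span (fun r hr => inner_eq_zero_symm.1 (horth r hr x hx)) hy)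

theorem IsRootChain.exists_snoc_of_span_ne {k : ℕ} {x : Fin (k + 1) → V} (hx : IsRootChain x)
    (hK : IsThetaIntegral K) (hgen : K = Submodule.span Eis (latticeRoots K))
    (hindec : IsIndecomposable K) (hxK : ∀ i, x i ∈ K)
    (hne : K ≠ Submodule.span Eis (Set.range x)) :
    ∃ s ∈ latticeRoots K \ Submodule.span Eis (Set.range x),
      IsRootChain (Fin.snoc x s : Fin (k + 2) → V) := by
  have hmem i : x i ∈ Submodule.span Eis (Set.range x) := Submodule.subset_span ⟨i, rfl⟩
  have hbot : Submodule.span Eis (Set.range x) ≠ ⊥ := fun h => by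
    have hx0 : x 0 = 0 := (Submodule.eq_bot_iff _).1 h _ (hmem 0)
    simpa [hx0] using hx.inner_self 0
  have hlt : Submodule.span Eis (Set.range x) < K :=
    (Submodule.span_le.2 (Set.range_subset_iff.2 hxK)).lt_of_ne hne.symm
  obtain ⟨r, hr, y, hy, hyr⟩ := hindec.exists_outside_root_inner_ne_zero hgen hbot hlt
  refine hx.exists_snoc hK (fun i => ⟨⟨hxK i, hx.inner_self i⟩, hmem i⟩) hr ?_
  by_contra! horth
  exact hyr (inner_eq_zero_of_mem_span (Set.forall_mem_range.2 horth) hy)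

theorem latticeRoots_nonempty (hK : K ≠ ⊥) (hgen : K = Submodule.span Eis (latticeRoots K)) :
    (latticeRoots K).Nonempty := by
  rw [Set.nonempty_iff_ne_empty]
  intro hempty
  rw [hempty, Submodule.span_empty] at hgen
  exact hK hgen

theorem eisenstein_root_lattice_classification_general (K : Submodule Eis V) (hKne : K ≠ ⊥)
    (hint : ∀ x ∈ K, ∀ y ∈ K, ∃ a ∈ Eis, ⟪x, y⟫ = θ * a)
    (hgen : K = Submodule.span Eis {x | x ∈ K ∧ ⟪x, x⟫ = 3})
    (hindec : ¬ ∃ K₁ K₂ : Submodule Eis V, K₁ ≠ ⊥ ∧ K₂ ≠ ⊥ ∧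
      (∀ x ∈ K₁, ∀ y ∈ K₂, ⟪x, y⟫ = 0) ∧ K₁ ⊔ K₂ = K) :
    ∃ k ∈ ({1, 2, 3, 4} : Set ℕ), ∃ x : Fin k → V,
      K = Submodule.span Eis (Set.range x) ∧
      (∀ i, ⟪x i, x i⟫ = 3) ∧
      (∀ (i : Fin k) (h : (i : ℕ) + 1 < k), ⟪x i, x ⟨(i : ℕ) + 1, h⟩⟫ = -p) ∧
      (∀ i j : Fin k, (i : ℕ) + 1 < (j : ℕ) → ⟪x i, x j⟫ = 0) := by
  by_contra hnone
  have extend {k : ℕ} (hk : k < 4) (x : Fin (k + 1) → V) (hx : IsRootChain x)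
      (hxK : ∀ i, x i ∈ K) : ∃ s ∈ latticeRoots K \ Submodule.span Eis (Set.range x),
        IsRootChain (Fin.snoc x s : Fin (k + 2) → V) :=
    hx.exists_snoc_of_span_ne hint hgen hindec hxK fun hspan => hnone
      ⟨k + 1, by simp only [Set.mem_insert_iff, Set.mem_singleton_iff]; omega, x, hspan,
        hx.inner_self, hx.inner_next, hx.inner_far⟩
  have chain : ∀ k < 4, ∃ x : Fin (k + 1) → V, IsRootChain x ∧ ∀ i, x i ∈ K := by
    intro k hk
    induction k with
    | zero =>
      obtain ⟨r, hr⟩ := latticeRoots_nonempty hKne hgen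
      exact ⟨_, IsRootChain.singleton hr.2, fun _ => hr.1⟩
    | succ k ih =>
      obtain ⟨x, hx, hxK⟩ := ih (by omega)
      obtain ⟨s, hs, hchain⟩ := extend (by omega) x hx hxK
      exact ⟨_, hchain, Fin.lastCases (by simpa using hs.1.1) (by simpa using hxK)⟩
  obtain ⟨x, hx, hxK⟩ := chain 3 (by norm_num)
  obtain ⟨s, hs, hchain⟩ := extend (by norm_num) x hx hxK
  have hmem := hchain.last_mem_span_init
  rw [Fin.snoc_last, Fin.init_snoc] at hmem
  exact hs.2 hmem

end Roots

theorem eisenstein_root_lattice_classification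
    {V : Type*} [NormedAddCommGroup V] [InnerProductSpace ℂ V] [FiniteDimensional ℂ V]
    (K : Submodule Eis V) (hKne : K ≠ ⊥) (hKfg : K.FG)
    (hint : ∀ x ∈ K, ∀ y ∈ K, ∃ a ∈ Eis, ⟪x, y⟫ = θ * a)
    (hgen : K = Submodule.span Eis {x | x ∈ K ∧ ⟪x, x⟫ = 3})
    (hindec : ¬ ∃ K₁ K₂ : Submodule Eis V, K₁ ≠ ⊥ ∧ K₂ ≠ ⊥ ∧
      (∀ x ∈ K₁, ∀ y ∈ K₂, ⟪x, y⟫ = 0) ∧ K₁ ⊔ K₂ = K) :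
    ∃ k ∈ ({1, 2, 3, 4} : Set ℕ), ∃ x : Fin k → V,
      K = Submodule.span Eis (Set.range x) ∧
      (∀ i, ⟪x i, x i⟫ = 3) ∧
      (∀ (i : Fin k) (h : (i : ℕ) + 1 < k), ⟪x i, x ⟨(i : ℕ) + 1, h⟩⟫ = -p) ∧
      (∀ i j : Fin k, (i : ℕ) + 1 < (j : ℕ) → ⟪x i, x j⟫ = 0) :=
  eisenstein_root_lattice_classification_general K hKne hint hgen hindec
end

section
/- Let V be a complex inner product space and let x_1, x_2, x_3, x_4 ∈ V satisfy |x_i|² = 3 for all i, ⟨x_1,x_2⟩ = ⟨x_2,x_3⟩ = ⟨x_3,x_4⟩ = −p, ⟨x_1,x_4⟩ = −ω̄·p, and ⟨x_1,x_3⟩ = ⟨x_2,x_4⟩ = 0 (the circuit diagram Circ_{4,ω̄}). Set x_4' = ω̄·x_2 − p·x_3 − x_4. Then |x_4'|² = 3, ⟨x_1,x_4'⟩ = 0, ⟨x_2,x_4'⟩ = 0, ⟨x_3,x_4'⟩ = −p, and {x_1, x_2, x_3, x_4'} generates the same ℤ[ω]-submodule of V as {x_1, x_2, x_3, x_4}; i.e.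 the new quadruple forms the linear diagram of E_8^ℰ. (Hence L(Circ_{4,ω̄}) is isometric to E_8^ℰ.) -/
/- The circuit diagram Circ_{4,ω̄} is equivalent to the linear E₈ᵉ diagram:
   replacing x₄ by x₄' = ω̄x₂ - p x₃ - x₄ gives the linear diagram, generating
   the same ℤ[ω]-submodule. -/

open scoped ComplexInnerProductSpace

set_option synthInstance.maxHeartbeats 1000000
set_option maxHeartbeats 1000000

/-!
All inner products reduce to the two identities `p * conj p = 3` and `conj ω * conj p = -p`.
They show that `x₄'` is orthogonal to `x₁`, `x₂` and to the old vector `x₄`, and that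
`⟪x₃, x₄'⟫ = -p`; expanding the left argument of `⟪x₄', x₄'⟫` then leaves only
`-conj p * ⟪x₃, x₄'⟫ = conj p * p`. The lattice does not change because
`x₄ ↦ u - x₄` is an involution for `u = ω̄ x₂ - p x₃`, which lies in the span of `x₂` and `x₃`.
-/

section Eisenstein

open scoped ComplexConjugate

theorem ω_sq_add_ω_add_one : ω ^ 2 + ω + 1 = 0 := by
  have hsum := isPrimitiveRoot_ω.geom_sum_eq_zero (by norm_num)
  simp only [Finset.sum_range_succ, Finset.sum_range_zero, pow_zero, pow_one] at hsum
  linear_combination hsum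

theorem ω_mul_conj_ω : ω * conj ω = 1 := by
  rw [RCLike.mul_conj, isPrimitiveRoot_ω.norm'_eq_one three_ne_zero]
  norm_num

theorem p_mul_conj_p : p * conj p = 3 := by
  rw [conj_p, p, conj_ω]
  linear_combination -ω_sq_add_ω_add_one

theorem conj_ω_mul_conj_p : conj ω * conj p = -p := by
  rw [conj_p, p]
  linear_combination -ω_mul_conj_ω

theorem conj_ω_mem_Eis : conj ω ∈ Eis := by
  have hω : ω ∈ Eis := Subring.mem_closure_of_mem (Set.mem_singleton ω)
  rw [conj_ω]
  exact sub_mem (neg_mem (one_mem Eis)) hω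

end Eisenstein

theorem span_insert_sub_eq_of_mem_span {R M : Type*} [Ring R] [AddCommGroup M] [Module R M]
    {s : Set M} {u : M} (hu : u ∈ Submodule.span R s) (x : M) :
    Submodule.span R (insert (u - x) s) = Submodule.span R (insert x s) := by
  have span_le (y : M) : Submodule.span R (insert (u - y) s) ≤ Submodule.span R (insert y s) := by
    have hs : Submodule.span R s ≤ Submodule.span R (insert y s) :=
      Submodule.span_mono (Set.subset_insert y s)
    rw [Submodule.span_le, Set.insert_subset_iff]
    exact ⟨sub_mem (hs hu) (Submodule.mem_span_of_mem (Set.mem_insert y s)),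
      Submodule.span_le.mp hs⟩
  refine (span_le x).antisymm ?_
  simpa only [sub_sub_cancel] using span_le (u - x)

/-- The vector `x₄'` that replaces `x₄` to turn a circuit `x₁, x₂, x₃, x₄` into a linear
diagram. The scalars `ζ` and `q` play the roles of `ω̄` and `p`. -/
def straightenedEnd {A M : Type*} [Ring A] [AddCommGroup M] [Module A M] (ζ q : A)
    (x₂ x₃ x₄ : M) : M :=
  ζ • x₂ - q • x₃ - x₄

theorem span_straightenedEnd {A M : Type*} [Ring A] [AddCommGroup M] [Module A M]
    {R : Subring A} {ζ q : A} (hζR : ζ ∈ R) (hqR : q ∈ R) (x₁ x₂ x₃ x₄ : M) :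
    Submodule.span R {x₁, x₂, x₃, straightenedEnd ζ q x₂ x₃ x₄} =
      Submodule.span R {x₁, x₂, x₃, x₄} := by
  have insert_last (y : M) : ({x₁, x₂, x₃, y} : Set M) = insert y {x₁, x₂, x₃} := by
    grind
  have hx₂ : x₂ ∈ Submodule.span R {x₁, x₂, x₃} := Submodule.mem_span_of_mem (by simp)
  have hx₃ : x₃ ∈ Submodule.span R {x₁, x₂, x₃} := Submodule.mem_span_of_mem (by simp)
  have hu : ζ • x₂ - q • x₃ ∈ Submodule.span R {x₁, x₂, x₃} :=
    sub_mem (Submodule.smul_mem _ (⟨ζ, hζR⟩ : R) hx₂) (Submodule.smul_mem _ (⟨q, hqR⟩ : R) hx₃)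
  rw [insert_last, insert_last, straightenedEnd, span_insert_sub_eq_of_mem_span hu]

section InnerProducts

open scoped ComplexConjugate InnerProductSpace

variable {𝕜 V : Type*} [RCLike 𝕜] [SeminormedAddCommGroup V] [InnerProductSpace 𝕜 V]
  {ζ q : 𝕜} {x₁ x₂ x₃ x₄ : V}

theorem inner_straightenedEnd_right (v : V) :
    ⟪v, straightenedEnd ζ q x₂ x₃ x₄⟫_𝕜 = ζ * ⟪v, x₂⟫_𝕜 - q * ⟪v, x₃⟫_𝕜 - ⟪v, x₄⟫_𝕜 := by
  simp only [straightenedEnd, inner_sub_right, inner_smul_right]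

theorem inner_straightenedEnd_left (v : V) :
    ⟪straightenedEnd ζ q x₂ x₃ x₄, v⟫_𝕜 =
      conj ζ * ⟪x₂, v⟫_𝕜 - conj q * ⟪x₃, v⟫_𝕜 - ⟪x₄, v⟫_𝕜 := by
  simp only [straightenedEnd, inner_sub_left, inner_smul_left]

theorem inner_first_straightenedEnd (h12 : ⟪x₁, x₂⟫_𝕜 = -q) (h13 : ⟪x₁, x₃⟫_𝕜 = 0)
    (h14 : ⟪x₁, x₄⟫_𝕜 = -(ζ * q)) : ⟪x₁, straightenedEnd ζ q x₂ x₃ x₄⟫_𝕜 = 0 := by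
  rw [inner_straightenedEnd_right, h12, h13, h14]
  ring

theorem inner_second_straightenedEnd (hq : q * conj q = 3) (hζ : ζ * conj q = -q)
    (h2 : ⟪x₂, x₂⟫_𝕜 = 3) (h23 : ⟪x₂, x₃⟫_𝕜 = -q) (h24 : ⟪x₂, x₄⟫_𝕜 = 0) :
    ⟪x₂, straightenedEnd ζ q x₂ x₃ x₄⟫_𝕜 = 0 := by
  rw [inner_straightenedEnd_right, h2, h23, h24]
  linear_combination q * hζ - ζ * hq

theorem inner_third_straightenedEnd (hζ : ζ * conj q = -q) (h3 : ⟪x₃, x₃⟫_𝕜 = 3)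
    (h23 : ⟪x₂, x₃⟫_𝕜 = -q) (h34 : ⟪x₃, x₄⟫_𝕜 = -q) :
    ⟪x₃, straightenedEnd ζ q x₂ x₃ x₄⟫_𝕜 = -q := by
  have h32 : ⟪x₃, x₂⟫_𝕜 = -conj q := by rw [← inner_conj_symm, h23, map_neg]
  rw [inner_straightenedEnd_right, h32, h3, h34]
  linear_combination -hζ

theorem inner_fourth_straightenedEnd (hq : q * conj q = 3) (h4 : ⟪x₄, x₄⟫_𝕜 = 3)
    (h34 : ⟪x₃, x₄⟫_𝕜 = -q) (h24 : ⟪x₂, x₄⟫_𝕜 = 0) :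
    ⟪x₄, straightenedEnd ζ q x₂ x₃ x₄⟫_𝕜 = 0 := by
  have h42 : ⟪x₄, x₂⟫_𝕜 = 0 := inner_eq_zero_symm.mp h24
  have h43 : ⟪x₄, x₃⟫_𝕜 = -conj q := by rw [← inner_conj_symm, h34, map_neg]
  rw [inner_straightenedEnd_right, h42, h43, h4]
  linear_combination hq

theorem inner_straightenedEnd_self (hq : q * conj q = 3) (hζ : ζ * conj q = -q)
    (h2 : ⟪x₂, x₂⟫_𝕜 = 3) (h3 : ⟪x₃, x₃⟫_𝕜 = 3) (h4 : ⟪x₄, x₄⟫_𝕜 = 3)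
    (h23 : ⟪x₂, x₃⟫_𝕜 = -q) (h34 : ⟪x₃, x₄⟫_𝕜 = -q) (h24 : ⟪x₂, x₄⟫_𝕜 = 0) :
    ⟪straightenedEnd ζ q x₂ x₃ x₄, straightenedEnd ζ q x₂ x₃ x₄⟫_𝕜 = 3 := by
  rw [inner_straightenedEnd_left, inner_second_straightenedEnd hq hζ h2 h23 h24,
    inner_third_straightenedEnd hζ h3 h23 h34, inner_fourth_straightenedEnd hq h4 h34 h24]
  linear_combination hq

theorem circ4_equiv_E8_general {R : Subring 𝕜} (hq : q * conj q = 3) (hζ : ζ * conj q = -q)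
    (hζR : ζ ∈ R) (hqR : q ∈ R)
    (h2 : ⟪x₂, x₂⟫_𝕜 = 3) (h3 : ⟪x₃, x₃⟫_𝕜 = 3) (h4 : ⟪x₄, x₄⟫_𝕜 = 3)
    (h12 : ⟪x₁, x₂⟫_𝕜 = -q) (h23 : ⟪x₂, x₃⟫_𝕜 = -q) (h34 : ⟪x₃, x₄⟫_𝕜 = -q)
    (h14 : ⟪x₁, x₄⟫_𝕜 = -(ζ * q)) (h13 : ⟪x₁, x₃⟫_𝕜 = 0) (h24 : ⟪x₂, x₄⟫_𝕜 = 0) :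
    ⟪straightenedEnd ζ q x₂ x₃ x₄, straightenedEnd ζ q x₂ x₃ x₄⟫_𝕜 = 3 ∧
    ⟪x₁, straightenedEnd ζ q x₂ x₃ x₄⟫_𝕜 = 0 ∧
    ⟪x₂, straightenedEnd ζ q x₂ x₃ x₄⟫_𝕜 = 0 ∧
    ⟪x₃, straightenedEnd ζ q x₂ x₃ x₄⟫_𝕜 = -q ∧
    Submodule.span R {x₁, x₂, x₃, straightenedEnd ζ q x₂ x₃ x₄} =
      Submodule.span R {x₁, x₂, x₃, x₄} :=
  ⟨inner_straightenedEnd_self hq hζ h2 h3 h4 h23 h34 h24,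
    inner_first_straightenedEnd h12 h13 h14,
    inner_second_straightenedEnd hq hζ h2 h23 h24,
    inner_third_straightenedEnd hζ h3 h23 h34,
    span_straightenedEnd hζR hqR x₁ x₂ x₃ x₄⟩

end InnerProducts

theorem circ4_equiv_E8
    {V : Type*} [NormedAddCommGroup V] [InnerProductSpace ℂ V]
    (x₁ x₂ x₃ x₄ : V)
    (h1 : ⟪x₁, x₁⟫ = 3) (h2 : ⟪x₂, x₂⟫ = 3) (h3 : ⟪x₃, x₃⟫ = 3) (h4 : ⟪x₄, x₄⟫ = 3)
    (h12 : ⟪x₁, x₂⟫ = -p) (h23 : ⟪x₂, x₃⟫ = -p) (h34 : ⟪x₃, x₄⟫ = -p)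
    (h14 : ⟪x₁, x₄⟫ = -(starRingEnd ℂ ω * p))
    (h13 : ⟪x₁, x₃⟫ = 0) (h24 : ⟪x₂, x₄⟫ = 0) :
    ⟪starRingEnd ℂ ω • x₂ - p • x₃ - x₄, starRingEnd ℂ ω • x₂ - p • x₃ - x₄⟫ = 3 ∧
    ⟪x₁, starRingEnd ℂ ω • x₂ - p • x₃ - x₄⟫ = 0 ∧
    ⟪x₂, starRingEnd ℂ ω • x₂ - p • x₃ - x₄⟫ = 0 ∧
    ⟪x₃, starRingEnd ℂ ω • x₂ - p • x₃ - x₄⟫ = -p ∧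
    Submodule.span Eis ({x₁, x₂, x₃, starRingEnd ℂ ω • x₂ - p • x₃ - x₄} : Set V) =
      Submodule.span Eis ({x₁, x₂, x₃, x₄} : Set V) := by
  exact circ4_equiv_E8_general p_mul_conj_p conj_ω_mul_conj_p conj_ω_mem_Eis p_mem_Eis
    h2 h3 h4 h12 h23 h34 h14 h13 h24
end

section
/- Let V be a finite-dimensional complex inner product space, Φ a nonempty finite set of nonzero vectors of V, and μ : Φ → ℝ a function with μ(r) > 0 for every r ∈ Φ. Then there exists a vector w ∈ V with ⟨r,w⟩ ≠ 0 for all r ∈ Φ such that Σ_{r∈Φ} μ(r)·(⟨r,w⟩/|⟨r,w⟩|)·r = w; that is, the map α(w) = Σ_{r∈Φ} μ(r)(⟨r,w⟩/|⟨r,w⟩|) r, defined on the complement of the union of the hyperplanes r^⊥, has a fixed point. -/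
/- Existence of Weyl vectors: the averaging map
   α(w) = Σ_{r∈Φ} μ(r)(⟨r,w⟩/|⟨r,w⟩|) r has a fixed point away from the
   mirrors. -/

open scoped ComplexInnerProductSpace

set_option synthInstance.maxHeartbeats 1000000
set_option maxHeartbeats 1000000

/-!
Replacing each root `r` by `v = μ(r) r` removes the weights. Among all vectors `∑ cᵢ vᵢ` with
unimodular coefficients choose a longest one, `w`; it exists by compactness. Replacing the single
coefficient `cᵢ` by a unimodular `z ≠ cᵢ` adds the nonzero vector `(z - cᵢ) vᵢ` without lengthening
`w`, which forces `Re (z ⟨w, vᵢ⟩) < Re (cᵢ ⟨w, vᵢ⟩)`. Thus `cᵢ` is the strict maximiser of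
`z ↦ Re (z ⟨w, vᵢ⟩)` on the unit circle, so `⟨vᵢ, w⟩ ≠ 0` and `cᵢ` is the phase of `⟨vᵢ, w⟩`.
-/

open ComplexConjugate RCLike

theorem sum_update_smul {R M ι : Type*} [Ring R] [AddCommGroup M] [Module R M] [Fintype ι]
    [DecidableEq ι] (c : ι → R) (v : ι → M) (i : ι) (z : R) :
    ∑ j, Function.update c i z j • v j = ∑ j, c j • v j + (z - c i) • v i := by
  have hupdate : Function.update c i z = c + Pi.single i (z - c i) := by
    rw [Pi.update_eq_sub_add_single, Pi.single_sub, sub_add_eq_add_sub, add_sub_assoc]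
  simp [hupdate, add_smul, Finset.sum_add_distrib, Pi.single_apply]

theorem exists_forall_norm_sum_smul_le {𝕜 E ι : Type*} [NormedField 𝕜] [ProperSpace 𝕜]
    [SeminormedAddCommGroup E] [NormedSpace 𝕜 E] [Fintype ι] (v : ι → E) :
    ∃ c : ι → 𝕜, (∀ i, ‖c i‖ = 1) ∧
      ∀ d : ι → 𝕜, (∀ i, ‖d i‖ = 1) → ‖∑ i, d i • v i‖ ≤ ‖∑ i, c i • v i‖ := by
  have hcompact : IsCompact (Set.univ.pi fun _ : ι ↦ Metric.sphere (0 : 𝕜) 1) :=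
    isCompact_univ_pi fun _ ↦ isCompact_sphere _ _
  have hcont : Continuous fun c : ι → 𝕜 ↦ ‖∑ i, c i • v i‖ := by fun_prop
  obtain ⟨c, hc, hmax⟩ := hcompact.exists_isMaxOn ⟨1, by simp⟩ hcont.continuousOn
  exact ⟨c, by simpa using hc, fun d hd ↦ hmax (by simpa using hd)⟩

section StrictMaximiser

variable {𝕜 : Type*} [RCLike 𝕜] {a c : 𝕜}

theorem ne_zero_of_forall_re_mul_conj_lt (hc : ‖c‖ = 1)
    (hmax : ∀ z : 𝕜, ‖z‖ = 1 → z ≠ c → re (z * conj a) < re (c * conj a)) : a ≠ 0 := by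
  rintro rfl
  have hc0 : c ≠ 0 := norm_ne_zero_iff.1 (hc ▸ one_ne_zero)
  simpa using hmax (-c) (by rwa [norm_neg]) (neg_ne_self.2 hc0)

theorem div_norm_eq_of_forall_re_mul_conj_lt (hc : ‖c‖ = 1)
    (hmax : ∀ z : 𝕜, ‖z‖ = 1 → z ≠ c → re (z * conj a) < re (c * conj a)) :
    a / (‖a‖ : 𝕜) = c := by
  have ha : (‖a‖ : 𝕜) ≠ 0 := by simpa using ne_zero_of_forall_re_mul_conj_lt hc hmax
  by_contra hne
  have hphase : a / (‖a‖ : 𝕜) * conj a = (‖a‖ : 𝕜) := by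
    rw [div_mul_eq_mul_div, mul_conj, pow_two, mul_div_cancel_right₀ _ ha]
  have hlt : ‖a‖ < re (c * conj a) := by
    simpa only [hphase, ofReal_re] using hmax (a / (‖a‖ : 𝕜)) (by simpa using ha) hne
  have hle : re (c * conj a) ≤ ‖a‖ := by
    simpa only [norm_mul, hc, one_mul, norm_conj] using re_le_norm (c * conj a)
  exact hlt.not_ge hle

end StrictMaximiser

section InnerProduct

variable {𝕜 E ι : Type*} [RCLike 𝕜] [NormedAddCommGroup E] [InnerProductSpace 𝕜 E] [Fintype ι]

theorem re_inner_neg_of_norm_add_le {x y : E} (hy : y ≠ 0) (hle : ‖x + y‖ ≤ ‖x‖) :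
    re (inner 𝕜 x y) < 0 := by
  have hsq : ‖x‖ ^ 2 + 2 * re (inner 𝕜 x y) + ‖y‖ ^ 2 ≤ ‖x‖ ^ 2 := by
    rw [← norm_add_sq]
    gcongr
  have hpos : 0 < ‖y‖ ^ 2 := by positivity
  linarith

theorem re_mul_conj_inner_lt_of_norm_add_sub_smul_le {w v : E} {c z : 𝕜} (hv : v ≠ 0)
    (hzc : z ≠ c) (hle : ‖w + (z - c) • v‖ ≤ ‖w‖) :
    re (z * conj (inner 𝕜 v w)) < re (c * conj (inner 𝕜 v w)) := by
  have hneg : re (inner 𝕜 w ((z - c) • v)) < 0 :=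
    re_inner_neg_of_norm_add_le (smul_ne_zero (sub_ne_zero.2 hzc) hv) hle
  rwa [inner_smul_right, ← inner_conj_symm w v, sub_mul, map_sub, sub_neg] at hneg

theorem exists_sum_inner_div_norm_smul_eq (v : ι → E) (hv : ∀ i, v i ≠ 0) :
    ∃ w : E, (∀ i, inner 𝕜 (v i) w ≠ 0) ∧
      ∑ i, (inner 𝕜 (v i) w / (‖inner 𝕜 (v i) w‖ : 𝕜)) • v i = w := by
  classical
  obtain ⟨c, hc, hlongest⟩ := exists_forall_norm_sum_smul_le (𝕜 := 𝕜) v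
  set w := ∑ i, c i • v i with hw
  have hstrict (i : ι) (z : 𝕜) (hz : ‖z‖ = 1) (hzc : z ≠ c i) :
      re (z * conj (inner 𝕜 (v i) w)) < re (c i * conj (inner 𝕜 (v i) w)) := by
    refine re_mul_conj_inner_lt_of_norm_add_sub_smul_le (hv i) hzc ?_
    rw [hw, ← sum_update_smul]
    refine hlongest _ fun j ↦ ?_
    obtain rfl | hji := eq_or_ne j i <;> simp [*]
  refine ⟨w, fun i ↦ ne_zero_of_forall_re_mul_conj_lt (hc i) (hstrict i), ?_⟩
  simp only [div_norm_eq_of_forall_re_mul_conj_lt (hc _) (hstrict _), ← hw]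

theorem inner_smul_left_div_norm {t : ℝ} (ht : 0 < t) (r w : E) :
    inner 𝕜 ((t : 𝕜) • r) w / (‖inner 𝕜 ((t : 𝕜) • r) w‖ : 𝕜) =
      inner 𝕜 r w / (‖inner 𝕜 r w‖ : 𝕜) := by
  have ht' : (t : 𝕜) ≠ 0 := ofReal_ne_zero.2 ht.ne'
  rw [inner_smul_left, conj_ofReal, norm_mul, norm_of_nonneg ht.le, ofReal_mul,
    mul_div_mul_left _ _ ht']

theorem weyl_vector_exists_general (r : ι → E) (hr : ∀ i, r i ≠ 0) (μ : ι → ℝ)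
    (hμ : ∀ i, 0 < μ i) :
    ∃ w : E, (∀ i, inner 𝕜 (r i) w ≠ 0) ∧
      ∑ i, ((μ i : 𝕜) * (inner 𝕜 (r i) w / (‖inner 𝕜 (r i) w‖ : 𝕜))) • r i = w := by
  have hμr (i : ι) : (μ i : 𝕜) • r i ≠ 0 := smul_ne_zero (ofReal_ne_zero.2 (hμ i).ne') (hr i)
  obtain ⟨w, hne, hfixed⟩ := exists_sum_inner_div_norm_smul_eq (𝕜 := 𝕜) _ hμr
  refine ⟨w, fun i ↦ ?_, ?_⟩
  · exact right_ne_zero_of_mul (inner_smul_left (𝕜 := 𝕜) (r i) w (μ i) ▸ hne i)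
  · simpa only [inner_smul_left_div_norm (hμ _), smul_smul, mul_comm] using hfixed

end InnerProduct

theorem weyl_vector_exists
    {V : Type*} [NormedAddCommGroup V] [InnerProductSpace ℂ V] [FiniteDimensional ℂ V]
    (Φ : Finset V) (hne : Φ.Nonempty) (h0 : (0 : V) ∉ Φ)
    (μ : V → ℝ) (hμ : ∀ r ∈ Φ, 0 < μ r) :
    ∃ w : V, (∀ r ∈ Φ, ⟪r, w⟫ ≠ 0) ∧
      ∑ r ∈ Φ, ((μ r : ℂ) * (⟪r, w⟫ / (‖⟪r, w⟫‖ : ℂ))) • r = w := by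
  obtain ⟨w, hw, hfixed⟩ := weyl_vector_exists_general (𝕜 := ℂ) (fun r : Φ ↦ (r : V))
    (fun r hr ↦ h0 (hr ▸ r.2)) (fun r ↦ μ r) (fun r ↦ hμ r r.2)
  exact ⟨w, fun r hr ↦ hw ⟨r, hr⟩, (Finset.sum_coe_sort Φ _).symm.trans hfixed⟩
end

section
/- Let V be a finite-dimensional complex inner product space, Φ a nonempty finite set of nonzero vectors of V, and μ : Φ → ℝ with μ(r) > 0 for all r. Define S : V∖{0} → ℝ by S(w) = ‖w‖^{-1} Σ_{r∈Φ} μ(r)|⟨r,w⟩|, and for w with ⟨r,w⟩ ≠ 0 for all r ∈ Φ define α(w) = Σ_{r∈Φ} μ(r)(⟨r,w⟩/|⟨r,w⟩|) r. Then for any w ≠ 0 with ⟨r,w⟩ ≠ 0 for all r ∈ Φ, the (real) Fréchet derivative of S at w is zero if and only if α(w) = (S(w)/‖w‖)·w. -/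
/- Criticality criterion: for w off the mirrors, the real Fréchet derivative
   of S(w) = ‖w‖⁻¹ Σ μ(r)|⟨r,w⟩| vanishes at w iff α(w) = (S(w)/‖w‖)·w. -/

open scoped ComplexInnerProductSpace

set_option synthInstance.maxHeartbeats 1000000
set_option maxHeartbeats 1000000

/-!
Away from the mirrors, the vector `α(w)` is the real gradient at `w` of the numerator
`F(v) = Σ μ(r)|⟨r,v⟩|`, because the norm has gradient `z / ‖z‖` at `z ≠ 0`. By the quotient rule
`S = F / ‖·‖` has gradient `‖w‖⁻¹ (α(w) - (S(w)/‖w‖) w)`, and a gradient vanishes exactly when the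
derivative does.
-/

section RealInnerProductSpace

variable {E : Type*} [NormedAddCommGroup E] [InnerProductSpace ℝ E]

theorem hasFDerivAt_norm {x : E} (hx : x ≠ 0) :
    HasFDerivAt (fun y : E => ‖y‖) (innerSL ℝ (‖x‖⁻¹ • x)) x := by
  have hsqrt : HasFDerivAt (fun y : E => √(‖y‖ ^ 2)) ((1 / (2 * √(‖x‖ ^ 2))) • 2 • innerSL ℝ x) x :=
    (hasStrictFDerivAt_norm_sq x).hasFDerivAt.sqrt (by positivity)
  simp only [Real.sqrt_sq (norm_nonneg _)] at hsqrt
  refine hsqrt.congr_fderiv ?_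
  rw [map_smul]
  module

theorem hasFDerivAt_norm_inv_mul {f : E → ℝ} {g x : E} (hx : x ≠ 0)
    (hf : HasFDerivAt f (innerSL ℝ g) x) :
    HasFDerivAt (fun y => ‖y‖⁻¹ * f y)
      (innerSL ℝ (‖x‖⁻¹ • (g - (‖x‖⁻¹ * f x / ‖x‖) • x))) x := by
  have hinv : HasFDerivAt (fun y : E => ‖y‖⁻¹) (-(‖x‖ ^ 2)⁻¹ • innerSL ℝ (‖x‖⁻¹ • x)) x :=
    (hasDerivAt_inv (norm_ne_zero_iff.mpr hx)).comp_hasFDerivAt x (hasFDerivAt_norm hx)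
  refine (hinv.mul hf).congr_fderiv ?_
  simp only [map_smul, map_sub]
  module

theorem fderiv_norm_inv_mul_eq_zero_iff {f : E → ℝ} {g x : E} (hx : x ≠ 0)
    (hf : HasFDerivAt f (innerSL ℝ g) x) :
    fderiv ℝ (fun y => ‖y‖⁻¹ * f y) x = 0 ↔ g = (‖x‖⁻¹ * f x / ‖x‖) • x := by
  rw [(hasFDerivAt_norm_inv_mul hx hf).fderiv, ← map_zero (innerSL ℝ), innerSL_inj,
    smul_eq_zero_iff_right (inv_ne_zero (norm_ne_zero_iff.mpr hx)), sub_eq_zero]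

end RealInnerProductSpace

section RealAndRCLike

variable {𝕜 V : Type*} [RCLike 𝕜] [NormedAddCommGroup V] [InnerProductSpace 𝕜 V]
  [InnerProductSpace ℝ V]

variable (𝕜) in
-- Both sides are given by the same polarization formula in the common norm.
theorem real_inner_eq_re_inner_of_common_norm (x y : V) :
    inner ℝ x y = RCLike.re (inner 𝕜 x y) := by
  rw [re_inner_eq_norm_add_mul_self_sub_norm_sub_mul_self_div_four,
    ← re_inner_eq_norm_add_mul_self_sub_norm_sub_mul_self_div_four (𝕜 := ℝ), RCLike.re_to_real]

theorem real_inner_rclike_smul_left (z : 𝕜) (x y : V) :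
    inner ℝ (z • x) y = inner ℝ z (inner 𝕜 x y) := by
  rw [real_inner_eq_re_inner_of_common_norm 𝕜, real_inner_eq_re_inner_of_common_norm 𝕜 z,
    inner_smul_left, RCLike.inner_apply']

theorem hasFDerivAt_norm_inner {r w : V} (hrw : inner 𝕜 r w ≠ 0) :
    HasFDerivAt (fun v => ‖inner 𝕜 r v‖)
      (innerSL ℝ ((inner 𝕜 r w / (‖inner 𝕜 r w‖ : 𝕜)) • r)) w := by
  have hinner : HasFDerivAt (fun v => inner 𝕜 r v) ((innerSL 𝕜 r).restrictScalars ℝ) w :=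
    ((innerSL 𝕜 r).restrictScalars ℝ).hasFDerivAt
  have hunit : ‖inner 𝕜 r w‖⁻¹ • inner 𝕜 r w = inner 𝕜 r w / (‖inner 𝕜 r w‖ : 𝕜) := by
    rw [RCLike.real_smul_eq_coe_mul, RCLike.ofReal_inv, div_eq_inv_mul]
  refine ((hasFDerivAt_norm hrw).comp w hinner).congr_fderiv ?_
  ext y
  rw [hunit]
  exact (real_inner_rclike_smul_left _ r y).symm

theorem hasFDerivAt_sum_mul_norm_inner {ι : Type*} (s : Finset ι) (r : ι → V) (μ : ι → ℝ) {w : V}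
    (hw : ∀ i ∈ s, inner 𝕜 (r i) w ≠ 0) :
    HasFDerivAt (fun v => ∑ i ∈ s, μ i * ‖inner 𝕜 (r i) v‖)
      (innerSL ℝ (∑ i ∈ s, ((μ i : 𝕜) * (inner 𝕜 (r i) w / (‖inner 𝕜 (r i) w‖ : 𝕜))) • r i))
      w := by
  refine (HasFDerivAt.fun_sum fun i hi =>
    (hasFDerivAt_norm_inner (hw i hi)).const_mul (μ i)).congr_fderiv ?_
  simp only [map_sum, mul_smul, ← RCLike.algebraMap_eq_ofReal, algebraMap_smul, map_smul]

theorem critical_point_iff_eigenvector_general {ι : Type*} (s : Finset ι) (r : ι → V) (μ : ι → ℝ)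
    (S : V → ℝ) (hS : ∀ v, S v = ‖v‖⁻¹ * ∑ i ∈ s, μ i * ‖inner 𝕜 (r i) v‖)
    (w : V) (hw : w ≠ 0) (hreg : ∀ i ∈ s, inner 𝕜 (r i) w ≠ 0) :
    fderiv ℝ S w = 0 ↔
      ∑ i ∈ s, ((μ i : 𝕜) * (inner 𝕜 (r i) w / (‖inner 𝕜 (r i) w‖ : 𝕜))) • r i =
        (S w / ‖w‖) • w := by
  obtain rfl : S = _ := funext hS
  exact fderiv_norm_inv_mul_eq_zero_iff hw (hasFDerivAt_sum_mul_norm_inner s r μ hreg)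

end RealAndRCLike

theorem critical_point_iff_eigenvector
    {V : Type*} [NormedAddCommGroup V] [InnerProductSpace ℂ V] [FiniteDimensional ℂ V]
    (Φ : Finset V) (hne : Φ.Nonempty) (h0 : (0 : V) ∉ Φ)
    (μ : V → ℝ) (hμ : ∀ r ∈ Φ, 0 < μ r)
    (S : V → ℝ) (hS : ∀ v : V, S v = ‖v‖⁻¹ * ∑ r ∈ Φ, μ r * ‖⟪r, v⟫‖)
    (w : V) (hw : w ≠ 0) (hreg : ∀ r ∈ Φ, ⟪r, w⟫ ≠ 0) :
    fderiv ℝ S w = 0 ↔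
      ∑ r ∈ Φ, ((μ r : ℂ) * (⟪r, w⟫ / (‖⟪r, w⟫‖ : ℂ))) • r = (S w / ‖w‖) • w := by
  let := InnerProductSpace.complexToReal (G := V)
  exact critical_point_iff_eigenvector_general Φ (fun r => r) μ S hS w hw hreg
end

section
/- Let V be a finite-dimensional complex inner product space, Φ a nonempty finite set of nonzero vectors of V, and μ : Φ → ℝ with μ(r) > 0 for all r. Define S : V∖{0} → ℝ by S(w) = ‖w‖^{-1} Σ_{r∈Φ} μ(r)|⟨r,w⟩|. If w ≠ 0 lies on some mirror, i.e. ⟨r_0,w⟩ = 0 for some r_0 ∈ Φ, then S does not have a local maximum at w: for every ε > 0 there exists w' ∈ V∖{0} with ‖w' − w‖ < ε and S(w') > S(w). -/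
/- S(w) = ‖w‖⁻¹ Σ μ(r)|⟨r,w⟩| has no local maximum at a nonzero point lying
   on a mirror. -/

open scoped ComplexInnerProductSpace

set_option synthInstance.maxHeartbeats 1000000
set_option maxHeartbeats 1000000

/-!
Write `S v = F v / ‖v‖` and move from `w` along the normal `r₀` of a mirror through `w`. Since `F`
is a sum of seminorms, one of which has a kink at `w` in the direction `r₀`, the symmetrised
increment `F (w + t r₀) + F (w - t r₀) - 2 F w` grows at least linearly in `t`. As `r₀ ⟂ w`, the
norm `‖w ± t r₀‖` grows only quadratically, so a local maximum of `S` at `w` would force this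
increment to be `O(t²)`.
-/

open Filter Topology
open scoped InnerProductSpace

section SymmetrisedIncrement

theorem two_mul_norm_le_norm_add_add_norm_sub {E : Type*} [SeminormedAddCommGroup E]
    [NormedSpace ℝ E] (x y : E) : 2 * ‖x‖ ≤ ‖x + y‖ + ‖x - y‖ :=
  calc 2 * ‖x‖ = ‖(2 : ℝ) • x‖ := by rw [norm_smul, Real.norm_ofNat]
    _ = ‖(x + y) + (x - y)‖ := by rw [two_smul, add_add_sub_cancel]
    _ ≤ ‖x + y‖ + ‖x - y‖ := norm_add_le _ _

variable {𝕜 V : Type*} [RCLike 𝕜] [SeminormedAddCommGroup V] [InnerProductSpace 𝕜 V]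

variable (𝕜) in
/-- The numerator `∑ r ∈ Φ, μ r |⟨r, v⟩|` of the function `S`, over a real or complex inner product
space; the scalar field is explicit because it cannot be inferred from the vectors. -/
noncomputable def weightedInnerSum (Φ : Finset V) (μ : V → ℝ) (v : V) : ℝ :=
  ∑ r ∈ Φ, μ r * ‖⟪r, v⟫_𝕜‖

variable {Φ : Finset V} {μ : V → ℝ}

theorem weightedInnerSum_nonneg (hμ : ∀ r ∈ Φ, 0 ≤ μ r) (v : V) : 0 ≤ weightedInnerSum 𝕜 Φ μ v :=
  Finset.sum_nonneg fun r hr => mul_nonneg (hμ r hr) (norm_nonneg _)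

theorem two_mul_weightedInnerSum_le (hμ : ∀ r ∈ Φ, 0 ≤ μ r) (v u : V) :
    2 * weightedInnerSum 𝕜 Φ μ v ≤
      weightedInnerSum 𝕜 Φ μ (v + u) + weightedInnerSum 𝕜 Φ μ (v - u) := by
  simp only [weightedInnerSum, Finset.mul_sum, ← Finset.sum_add_distrib]
  refine Finset.sum_le_sum fun r hr => ?_
  calc 2 * (μ r * ‖⟪r, v⟫_𝕜‖) = μ r * (2 * ‖⟪r, v⟫_𝕜‖) := by ring
    _ ≤ μ r * (‖⟪r, v⟫_𝕜 + ⟪r, u⟫_𝕜‖ + ‖⟪r, v⟫_𝕜 - ⟪r, u⟫_𝕜‖) :=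
      mul_le_mul_of_nonneg_left (two_mul_norm_le_norm_add_add_norm_sub _ _) (hμ r hr)
    _ = μ r * ‖⟪r, v + u⟫_𝕜‖ + μ r * ‖⟪r, v - u⟫_𝕜‖ := by
      rw [inner_add_right, inner_sub_right, mul_add]

theorem two_mul_weightedInnerSum_add_le_of_inner_eq_zero (hμ : ∀ r ∈ Φ, 0 ≤ μ r) {r₀ w : V}
    (hr₀ : r₀ ∈ Φ) (hw : ⟪r₀, w⟫_𝕜 = 0) (u : V) :
    2 * weightedInnerSum 𝕜 Φ μ w + 2 * (μ r₀ * ‖⟪r₀, u⟫_𝕜‖) ≤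
      weightedInnerSum 𝕜 Φ μ (w + u) + weightedInnerSum 𝕜 Φ μ (w - u) := by
  classical
  have split_r₀ (v : V) : weightedInnerSum 𝕜 Φ μ v =
      μ r₀ * ‖⟪r₀, v⟫_𝕜‖ + weightedInnerSum 𝕜 (Φ.erase r₀) μ v :=
    (Finset.add_sum_erase Φ (fun r => μ r * ‖⟪r, v⟫_𝕜‖) hr₀).symm
  have other_terms := two_mul_weightedInnerSum_le (𝕜 := 𝕜) (Φ := Φ.erase r₀)
    (fun r hr => hμ r (Finset.mem_of_mem_erase hr)) w u
  simp only [split_r₀, inner_add_right, inner_sub_right, hw, zero_add, zero_sub, norm_neg,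
    norm_zero, mul_zero]
  linarith

end SymmetrisedIncrement

section QuotientByNorm

variable {𝕜 V : Type*} [RCLike 𝕜] [NormedAddCommGroup V] [InnerProductSpace 𝕜 V]

theorem norm_add_le_norm_add_sq_div_of_inner_eq_zero {w x : V} (hw : w ≠ 0) (hwx : ⟪w, x⟫_𝕜 = 0) :
    ‖w + x‖ ≤ ‖w‖ + ‖x‖ ^ 2 / (2 * ‖w‖) := by
  have pythagoras : ‖w + x‖ ^ 2 = ‖w‖ ^ 2 + ‖x‖ ^ 2 := by
    simpa only [sq] using norm_add_sq_eq_norm_sq_add_norm_sq_of_inner_eq_zero w x hwx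
  calc ‖w + x‖ = 2 * ‖w‖ * ‖w + x‖ / (2 * ‖w‖) := by field_simp
    _ ≤ (‖w‖ ^ 2 + ‖w + x‖ ^ 2) / (2 * ‖w‖) := by
      gcongr
      exact two_mul_le_add_sq _ _
    _ = ‖w‖ + ‖x‖ ^ 2 / (2 * ‖w‖) := by
      rw [pythagoras]
      field_simp
      ring

variable {f : V → ℝ} {w : V}

theorem eventually_le_mul_norm_of_isLocalMax_inv_norm_mul (hw : w ≠ 0)
    (hmax : IsLocalMax (fun v => ‖v‖⁻¹ * f v) w) :
    ∀ᶠ v in 𝓝 w, f v ≤ ‖w‖⁻¹ * f w * ‖v‖ := by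
  filter_upwards [hmax, eventually_ne_nhds hw] with v hv hv0
  rwa [inv_mul_le_iff₀' (norm_pos_iff.mpr hv0)] at hv

theorem eventually_le_add_mul_norm_sq_of_isLocalMax_inv_norm_mul (hw : w ≠ 0) (hf : 0 ≤ f w)
    (hmax : IsLocalMax (fun v => ‖v‖⁻¹ * f v) w) :
    ∀ᶠ x in 𝓝 0, ⟪w, x⟫_𝕜 = 0 → f (w + x) ≤ f w + f w / (2 * ‖w‖ ^ 2) * ‖x‖ ^ 2 := by
  have translate : Tendsto (fun x => w + x) (𝓝 0) (𝓝 w) :=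
    (continuous_const_add w).tendsto' 0 w (add_zero w)
  filter_upwards [translate.eventually
    (eventually_le_mul_norm_of_isLocalMax_inv_norm_mul hw hmax)] with x hx hwx
  calc f (w + x) ≤ ‖w‖⁻¹ * f w * ‖w + x‖ := hx
    _ ≤ ‖w‖⁻¹ * f w * (‖w‖ + ‖x‖ ^ 2 / (2 * ‖w‖)) := by
      gcongr
      exact norm_add_le_norm_add_sq_div_of_inner_eq_zero hw hwx
    _ = f w + f w / (2 * ‖w‖ ^ 2) * ‖x‖ ^ 2 := by field_simp

theorem not_isLocalMax_inv_norm_mul_of_linear_increment {u : V} {c : ℝ} (hw : w ≠ 0)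
    (hwu : ⟪w, u⟫_𝕜 = 0) (hf : 0 ≤ f w) (hc : 0 < c)
    (hinc : ∀ᶠ t : ℝ in 𝓝[>] 0,
      2 * f w + 2 * (t * c) ≤ f (w + (t : 𝕜) • u) + f (w - (t : 𝕜) • u)) :
    ¬ IsLocalMax (fun v => ‖v‖⁻¹ * f v) w := by
  intro hmax
  set K := f w / (2 * ‖w‖ ^ 2)
  have hquad := eventually_le_add_mul_norm_sq_of_isLocalMax_inv_norm_mul (𝕜 := 𝕜) hw hf hmax
  have htend (a : V) : Tendsto (fun t : ℝ => (t : 𝕜) • a) (𝓝[>] 0) (𝓝 0) := by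
    have hcont : Continuous fun t : ℝ => (t : 𝕜) • a := by fun_prop
    exact (hcont.tendsto' 0 0 (by simp)).mono_left nhdsWithin_le_nhds
  have hbound : ∀ᶠ t : ℝ in 𝓝[>] 0, c ≤ t * (K * ‖u‖ ^ 2) := by
    filter_upwards [hinc, (htend u).eventually hquad, (htend (-u)).eventually hquad,
      self_mem_nhdsWithin] with t hinc_t hplus hminus ht
    have ht_pos : 0 < t := ht
    have hplus := hplus (by rw [inner_smul_right, hwu, mul_zero])
    have hminus := hminus (by rw [inner_smul_right, inner_neg_right, hwu, neg_zero, mul_zero])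
    rw [smul_neg, norm_neg, ← sub_eq_add_neg] at hminus
    rw [norm_smul, RCLike.norm_ofReal, abs_of_pos ht_pos] at hplus hminus
    refine le_of_mul_le_mul_left ?_ ht_pos
    linarith
  have hlim : Tendsto (fun t : ℝ => t * (K * ‖u‖ ^ 2)) (𝓝[>] 0) (𝓝 0) := by
    have hcont : Continuous fun t : ℝ => t * (K * ‖u‖ ^ 2) := by fun_prop
    exact (hcont.tendsto' 0 0 (by simp)).mono_left nhdsWithin_le_nhds
  exact hc.not_ge (ge_of_tendsto hlim hbound)

variable {Φ : Finset V} {μ : V → ℝ} {r₀ : V}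

theorem not_isLocalMax_inv_norm_mul_weightedInnerSum (hμ : ∀ r ∈ Φ, 0 ≤ μ r) (hw : w ≠ 0)
    (hr₀ : r₀ ∈ Φ) (hr₀_ne : r₀ ≠ 0) (hμr₀ : 0 < μ r₀) (hwr₀ : ⟪r₀, w⟫_𝕜 = 0) :
    ¬ IsLocalMax (fun v => ‖v‖⁻¹ * weightedInnerSum 𝕜 Φ μ v) w := by
  refine not_isLocalMax_inv_norm_mul_of_linear_increment (𝕜 := 𝕜) (u := r₀)
    (c := μ r₀ * ‖r₀‖ ^ 2) hw (inner_eq_zero_symm.mp hwr₀) (weightedInnerSum_nonneg hμ w)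
    (by positivity) ?_
  filter_upwards [self_mem_nhdsWithin] with t ht
  have hkink : μ r₀ * ‖⟪r₀, (t : 𝕜) • r₀⟫_𝕜‖ = t * (μ r₀ * ‖r₀‖ ^ 2) := by
    rw [inner_smul_right, norm_mul, RCLike.norm_ofReal, abs_of_pos ht,
      inner_self_eq_norm_sq_to_K, norm_pow, RCLike.norm_ofReal, abs_norm]
    ring
  rw [← hkink]
  exact two_mul_weightedInnerSum_add_le_of_inner_eq_zero hμ hr₀ hwr₀ _

theorem no_local_max_on_mirror_general (hμ : ∀ r ∈ Φ, 0 ≤ μ r) {S : V → ℝ}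
    (hS : ∀ v, S v = ‖v‖⁻¹ * ∑ r ∈ Φ, μ r * ‖⟪r, v⟫_𝕜‖) (hw : w ≠ 0) (hr₀ : r₀ ∈ Φ)
    (hr₀_ne : r₀ ≠ 0) (hμr₀ : 0 < μ r₀) (hwr₀ : ⟪r₀, w⟫_𝕜 = 0) :
    ∀ ε > 0, ∃ w' : V, w' ≠ 0 ∧ ‖w' - w‖ < ε ∧ S w < S w' := by
  intro ε hε
  have hS_eq : S = fun v => ‖v‖⁻¹ * weightedInnerSum 𝕜 Φ μ v := funext hS
  have hnot_max : ¬ IsLocalMax S w :=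
    hS_eq ▸ not_isLocalMax_inv_norm_mul_weightedInnerSum hμ hw hr₀ hr₀_ne hμr₀ hwr₀
  have hfreq : ∃ᶠ v in 𝓝 w, S w < S v := by
    simpa only [IsLocalMax, IsMaxFilter, not_eventually, not_le] using hnot_max
  obtain ⟨w', hlt, hne, hball⟩ := (hfreq.and_eventually
    ((eventually_ne_nhds hw).and (Metric.ball_mem_nhds w hε))).exists
  exact ⟨w', hne, mem_ball_iff_norm.mp hball, hlt⟩

end QuotientByNorm

theorem no_local_max_on_mirror
    {V : Type*} [NormedAddCommGroup V] [InnerProductSpace ℂ V] [FiniteDimensional ℂ V]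
    (Φ : Finset V) (hne : Φ.Nonempty) (h0 : (0 : V) ∉ Φ)
    (μ : V → ℝ) (hμ : ∀ r ∈ Φ, 0 < μ r)
    (S : V → ℝ) (hS : ∀ v : V, S v = ‖v‖⁻¹ * ∑ r ∈ Φ, μ r * ‖⟪r, v⟫‖)
    (w : V) (hw : w ≠ 0) (r₀ : V) (hr₀ : r₀ ∈ Φ) (hwr₀ : ⟪r₀, w⟫ = 0) :
    ∀ ε > 0, ∃ w' : V, w' ≠ 0 ∧ ‖w' - w‖ < ε ∧ S w < S w' :=
  no_local_max_on_mirror_general (fun r hr => (hμ r hr).le) hS hw hr₀ (ne_of_mem_of_not_mem hr₀ h0)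
    (hμ r₀ hr₀) hwr₀
end

section
/- Let n ≥ 2 and let x_0, x_1, …, x_n be elements of a group G satisfying the affine A_n Coxeter relations: x_i x_{i+1} x_i = x_{i+1} x_i x_{i+1} for all i (indices modulo n+1), and x_i x_j = x_j x_i whenever i − j ≢ ±1 (mod n+1). If x_0 x_1 ⋯ x_{n−1} = x_1 x_2 ⋯ x_n, then also x_1 x_2 ⋯ x_n = x_2 x_3 ⋯ x_n x_0. (That is, the relation rel_n(x_0,…,x_n) is cyclic in Cox(Ã_n, ∞): imposing it for one cyclic ordering forces it for the rotated ordering.) -/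
/-!
Write `a = x₀`, `b = x₁`, `P = x₂ ⋯ xₙ₋₁` and `Q = x₂ ⋯ xₙ`, so that the relation at the first
position is `a b P = b Q` and the relation at the second is `b Q = Q a`. Since `a` braids with `b`
and commutes with `P`, we get `b (b Q) = b a b P = a b a P = a b P a = b (Q a)`, and `b` cancels.
-/

theorem mul_eq_mul_of_braid_of_commute {S : Type*} [LeftCancelSemigroup S] {a b p q : S}
    (hbraid : a * b * a = b * a * b) (hcomm : Commute a p) (h : a * b * p = b * q) :
    b * q = q * a := by
  apply mul_left_cancel (a := b)
  calc b * (b * q) = b * a * b * p := by rw [← h]; simp only [mul_assoc]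
    _ = a * b * (a * p) := by rw [← hbraid, mul_assoc]
    _ = a * b * p * a := by rw [hcomm.eq, mul_assoc _ p]
    _ = b * (q * a) := by rw [h, mul_assoc]

theorem prod_map_range_rotate_of_braid_of_commute {M : Type*} [LeftCancelMonoid M] {n : ℕ}
    {y : ℕ → M} (hbraid : y 0 * y 1 * y 0 = y 1 * y 0 * y 1)
    (hcomm : ∀ i, 2 ≤ i → i < n → Commute (y 0) (y i)) (hclosed : y (n + 1) = y 0)
    (h : ((List.range n).map y).prod = ((List.range n).map fun i => y (i + 1)).prod) :
    ((List.range n).map fun i => y (i + 1)).prod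
      = ((List.range n).map fun i => y (i + 2)).prod := by
  match n with
  | 0 => rfl
  | 1 =>
    have h01 : y 0 = y 1 := by simpa using h
    simp [← h01, hclosed]
  | m + 2 =>
    have hcomm_prod : Commute (y 0) ((List.range m).map fun i => y (i + 2)).prod := by
      refine Commute.list_prod_right _ _ fun z hz => ?_
      obtain ⟨i, hi, rfl⟩ := List.mem_map.1 hz
      exact hcomm (i + 2) (by omega) (by simpa using hi)
    have hfirst : ((List.range (m + 2)).map y).prod
        = y 0 * y 1 * ((List.range m).map fun i => y (i + 2)).prod := by
      simp only [List.prod_range_succ', mul_assoc, Nat.succ_eq_add_one]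
    have hsecond : ((List.range (m + 2)).map fun i => y (i + 1)).prod
        = y 1 * ((List.range (m + 1)).map fun i => y (i + 2)).prod :=
      List.prod_range_succ' _ _
    have hthird : ((List.range (m + 2)).map fun i => y (i + 2)).prod
        = ((List.range (m + 1)).map fun i => y (i + 2)).prod * y 0 := by
      rw [List.prod_range_succ, ← hclosed]
    rw [hfirst, hsecond] at h
    rw [hsecond, hthird]
    exact mul_eq_mul_of_braid_of_commute hbraid hcomm_prod h

theorem natCast_zmod_succ_ne_one {n i : ℕ} (hi : 2 ≤ i) (hin : i ≤ n) :
    (i : ZMod (n + 1)) ≠ 1 := by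
  rw [← Nat.cast_one (R := ZMod (n + 1)), Ne, ZMod.natCast_eq_natCast_iff',
    Nat.mod_eq_of_lt (by omega), Nat.mod_eq_of_lt (by omega)]
  omega

theorem natCast_zmod_succ_ne_neg_one {n i : ℕ} (hin : i < n) : (i : ZMod (n + 1)) ≠ -1 := by
  rw [Ne, eq_neg_iff_add_eq_zero, ← Nat.cast_succ, ZMod.natCast_eq_zero_iff]
  exact Nat.not_dvd_of_pos_of_lt i.succ_pos (by omega)

theorem rel_n_cyclic_affine_An_general {M : Type*} [LeftCancelMonoid M] (n : ℕ)
    (x : ZMod (n + 1) → M) (hbraid : x 0 * x 1 * x 0 = x 1 * x 0 * x 1)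
    (hcomm : ∀ j : ZMod (n + 1), j ≠ 1 → j ≠ -1 → Commute (x 0) (x j))
    (h : ((List.range n).map fun i : ℕ => x i).prod
      = ((List.range n).map fun i : ℕ => x (i + 1)).prod) :
    ((List.range n).map fun i : ℕ => x (i + 1)).prod
      = ((List.range n).map fun i : ℕ => x (i + 2)).prod := by
  have hrotate := prod_map_range_rotate_of_braid_of_commute (n := n) (y := fun i => x i)
  push_cast at hrotate
  refine hrotate hbraid (fun i hi hin => ?_) (congrArg x ?_) h
  · exact hcomm i (natCast_zmod_succ_ne_one hi hin.le) (natCast_zmod_succ_ne_neg_one hin)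
  · exact_mod_cast ZMod.natCast_self (n + 1)

-- A list of naturals used where a list in `R` is expected is coerced through the `List` monad.
theorem map_bind_natCast {R : Type} {α : Type*} [NatCast R] (f : R → α) (l : List ℕ) :
    (do let a ← l; pure (a : R)).map f = l.map fun i : ℕ => f i := by
  simp only [List.bind_eq_flatMap, List.pure_def, ← List.map_eq_flatMap, List.map_map,
    Function.comp_def]

/- The relation rel_n(x_0,…,x_n) is cyclic in Cox(Ã_n, ∞): for elements
   x_0,…,x_n (indices mod n+1) of a group satisfying the affine A_n Coxeter
   relations, x_0⋯x_{n-1} = x_1⋯x_n implies x_1⋯x_n = x_2⋯x_n x_0. -/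

theorem rel_n_cyclic_affine_An
    {G : Type*} [Group G] (n : ℕ) (hn : 2 ≤ n)
    (x : ZMod (n + 1) → G)
    (hbraid : ∀ i : ZMod (n + 1), x i * x (i + 1) * x i = x (i + 1) * x i * x (i + 1))
    (hcomm : ∀ i j : ZMod (n + 1), i - j ≠ 1 → i - j ≠ -1 → x i * x j = x j * x i)
    (h : ((List.range n).map (fun i => x (i : ZMod (n + 1)))).prod
        = ((List.range n).map (fun i => x ((i : ZMod (n + 1)) + 1))).prod) :
    ((List.range n).map (fun i => x ((i : ZMod (n + 1)) + 1))).prod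
        = ((List.range n).map (fun i => x ((i : ZMod (n + 1)) + 2))).prod := by
  simp only [map_bind_natCast] at h ⊢
  exact rel_n_cyclic_affine_An_general n x (by simpa using hbraid 0)
    (fun j hj hj' => hcomm 0 j (by simpa [neg_eq_iff_eq_neg] using hj') (by simpa using hj)) h
end

section
/- Let x, y, z be elements of a group G that pairwise braid: xyx = yxy, yzy = zyz, zxz = xzx. Then: (1) if xyzx = yzxy then yzxy = zxyz (the relation rel_4(x,y,z) is cyclic); and (2) if xyzxyz = yzxyzx then yzxyzx = zxyzxy (the relation rel_6(x,y,z) is cyclic). -/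
/-!
Put `a = y z y⁻¹`. Cancelling a common factor, which the braid relations produce on both sides,
turns `rel₄(x, y, z)` into "`x` and `a` commute" and `rel₆(x, y, z)` into "`x` and `a` braid".
Likewise `rel₄(y, z, x)` and `rel₆(y, z, x)` say that `y` and `z x z⁻¹` commute, respectively
braid. Since `y` and `z` braid, `z a z⁻¹ = y`, so conjugation by `z` carries the pair `(x, a)` to
`(z x z⁻¹, y)`, and both properties are symmetric and invariant under conjugation.
-/

/-- The braid relation `aba = bab`, imposed on two generators joined by a simple edge of a Coxeter
diagram. Only a multiplication is needed to state it; the products are bracketed to the left. -/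
def Braids {M : Type*} [Mul M] (a b : M) : Prop :=
  a * b * a = b * a * b

namespace Braids

theorem symm_iff {M : Type*} [Mul M] {a b : M} : Braids a b ↔ Braids b a :=
  eq_comm

variable {G : Type*} [Group G] {x y z : G}

theorem conj_iff (g : G) {a b : G} : Braids (g * a * g⁻¹) (g * b * g⁻¹) ↔ Braids a b := by
  simp only [Braids, conj_mul, mul_left_inj, mul_right_inj]

theorem conj_conj_eq (hyz : Braids y z) : z * (y * z * y⁻¹) * z⁻¹ = y := by
  rw [mul_inv_eq_iff_eq_mul, ← mul_assoc, mul_inv_eq_iff_eq_mul, ← mul_assoc]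
  exact hyz.symm

theorem commute_conj_rotate (hyz : Braids y z) :
    Commute x (y * z * y⁻¹) ↔ Commute y (z * x * z⁻¹) := by
  rw [← Commute.conj_iff z, hyz.conj_conj_eq, Commute.symm_iff]

theorem braids_conj_rotate (hyz : Braids y z) :
    Braids x (y * z * y⁻¹) ↔ Braids y (z * x * z⁻¹) := by
  rw [← conj_iff z, hyz.conj_conj_eq, symm_iff]

theorem rel4_iff_commute_conj (hxy : Braids x y) :
    x * y * z * x = y * z * x * y ↔ Commute x (y * z * y⁻¹) := by
  have left_eq : x * y * z * x = x * (y * z * y⁻¹) * (y * x) := by group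
  have right_eq : y * z * x * y = y * z * y⁻¹ * x * (y * x) := calc
    y * z * x * y = y * z * y⁻¹ * (y * x * y) := by group
    _ = y * z * y⁻¹ * (x * y * x) := by rw [hxy]
    _ = y * z * y⁻¹ * x * (y * x) := by simp only [mul_assoc]
  rw [left_eq, right_eq, mul_left_inj, commute_iff_eq]

theorem rel6_iff_braids_conj (hxy : Braids x y) (hyz : Braids y z) (hzx : Braids z x) :
    x * y * z * x * y * z = y * z * x * y * z * x ↔ Braids x (y * z * y⁻¹) := by
  have mul_eq : y * z = z * (y * z * y⁻¹) := (mul_inv_eq_iff_eq_mul.mp hyz.conj_conj_eq).symm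
  rw [symm_iff]
  generalize y * z * y⁻¹ = a at mul_eq ⊢
  have left_eq : x * y * z * x * y * z = y * x * z * (a * x * a) := calc
    x * y * z * x * y * z = x * y * z * x * (y * z) := by simp only [mul_assoc]
    _ = x * y * (z * x * z) * a := by rw [mul_eq]; simp only [mul_assoc]
    _ = x * y * x * z * x * a := by rw [hzx]; simp only [mul_assoc]
    _ = y * x * (y * z) * x * a := by rw [hxy]; simp only [mul_assoc]
    _ = y * x * z * (a * x * a) := by rw [mul_eq]; simp only [mul_assoc]
  have right_eq : y * z * x * y * z * x = y * x * z * (x * a * x) := calc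
    y * z * x * y * z * x = y * z * x * (y * z) * x := by simp only [mul_assoc]
    _ = y * z * x * (z * a) * x := by rw [← mul_eq]
    _ = y * (z * x * z) * a * x := by simp only [mul_assoc]
    _ = y * x * z * (x * a * x) := by rw [hzx]; simp only [mul_assoc]
  rw [left_eq, right_eq, mul_right_inj, Braids]

theorem rel4_rotate (hxy : Braids x y) (hyz : Braids y z) :
    x * y * z * x = y * z * x * y ↔ y * z * x * y = z * x * y * z := by
  rw [hxy.rel4_iff_commute_conj, hyz.commute_conj_rotate, hyz.rel4_iff_commute_conj]

theorem rel6_rotate (hxy : Braids x y) (hyz : Braids y z) (hzx : Braids z x) :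
    x * y * z * x * y * z = y * z * x * y * z * x ↔
      y * z * x * y * z * x = z * x * y * z * x * y := by
  rw [hxy.rel6_iff_braids_conj hyz hzx, hyz.braids_conj_rotate, hyz.rel6_iff_braids_conj hzx hxy]

end Braids

/- For pairwise braiding x, y, z (the Ã₂ Coxeter relations), the relations
   rel_4(x,y,z) and rel_6(x,y,z) are cyclic. -/

theorem rel4_and_rel6_cyclic
    {G : Type*} [Group G] (x y z : G)
    (hxy : x * y * x = y * x * y)
    (hyz : y * z * y = z * y * z)
    (hzx : z * x * z = x * z * x) :
    (x * y * z * x = y * z * x * y → y * z * x * y = z * x * y * z) ∧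
    (x * y * z * x * y * z = y * z * x * y * z * x →
      y * z * x * y * z * x = z * x * y * z * x * y) :=
  ⟨(Braids.rel4_rotate hxy hyz).mp, (Braids.rel6_rotate hxy hyz hzx).mp⟩
end

section
/- Let x, y, z, w be elements of a group G satisfying the affine A_3 Coxeter relations: xyx = yxy, yzy = zyz, zwz = wzw, wxw = xwx, xz = zx, yw = wy. If xyzwxyzwx = yzwxyzwxy, then also yzwxyzwxy = zwxyzwxyz. (That is, the relation rel_9(x,y,z,w) is cyclic in Cox(Ã_3, ∞).) -/
/-!
If `a` and `b` braid and `a` commutes with every factor of `c`, then `(a b c) a = b (a b c)`.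
In a cycle of `n` generators, cut a product of `k (n - 1)` cyclically consecutive generators into
blocks of length `n - 1`. Each block begins one index lower than the previous one, so the
conjugations chain up: `P = x₀ x₁ ⋯ x_{m-1}` with `m = k (n - 1)` satisfies `x₁ P = P x_{m+1}`.
If moreover `P = x₁ ⋯ x_m`, this reads `x₁ (x₁ ⋯ x_m) = x₁ (x₂ ⋯ x_{m+1})`, and `x₁` cancels.
For `n = 4` and `k = 3` the product is `(xyz)(wxy)(zwx)`.
-/

section CyclicProd

variable {M : Type*} [Monoid M] {n : ℕ}

/-- The product `x_s x_{s+1} ⋯ x_{s+m-1}` of `m` cyclically consecutive terms of a family indexed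
modulo `n`. -/
def cyclicProd (x : ZMod n → M) (s : ZMod n) (m : ℕ) : M :=
  ((List.range m).map fun j : ℕ => x (s + j)).prod

/-- The relation `rel_m(x_s, x_{s+1}, …)`, with the cyclic family read from index `s` on. -/
def CyclicRel (m : ℕ) (x : ZMod n → M) (s : ZMod n) : Prop :=
  cyclicProd x s m = cyclicProd x (s + 1) m

theorem cyclicProd_zero (x : ZMod n → M) (s : ZMod n) : cyclicProd x s 0 = 1 := rfl

theorem cyclicProd_one (x : ZMod n → M) (s : ZMod n) : cyclicProd x s 1 = x s := by
  simp [cyclicProd]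

theorem cyclicProd_add (x : ZMod n → M) (s : ZMod n) (m l : ℕ) :
    cyclicProd x s (m + l) = cyclicProd x s m * cyclicProd x (s + m) l := by
  simp [cyclicProd, List.range_add, Function.comp_def, add_assoc]

theorem cyclicProd_succ (x : ZMod n → M) (s : ZMod n) (m : ℕ) :
    cyclicProd x s (m + 1) = cyclicProd x s m * x (s + m) := by
  rw [cyclicProd_add, cyclicProd_one]

theorem cyclicProd_succ' (x : ZMod n → M) (s : ZMod n) (m : ℕ) :
    cyclicProd x s (m + 1) = x s * cyclicProd x (s + 1) m := by
  rw [add_comm, cyclicProd_add, cyclicProd_one, Nat.cast_one]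

theorem commute_cyclicProd {x : ZMod n → M} {s : ZMod n} {m : ℕ} {a : M}
    (h : ∀ j < m, Commute a (x (s + j))) : Commute a (cyclicProd x s m) :=
  Commute.list_prod_right _ _ (by simpa using h)

end CyclicProd

theorem semiconjBy_mul_mul_of_braid_of_commute {S : Type*} [Semigroup S] {a b c : S}
    (braid : a * b * a = b * a * b) (comm : Commute a c) : SemiconjBy (a * b * c) a b :=
  have semiconj_ab : SemiconjBy (a * b) a b := braid.trans (mul_assoc b a b)
  semiconj_ab.mul_left comm.symm

theorem natCast_mul_add_two_eq_neg (k e : ℕ) : ((k * (e + 2) : ℕ) : ZMod (e + 3)) = -k := by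
  have period : (e + 3 : ZMod (e + 3)) = 0 := mod_cast ZMod.natCast_self (e + 3)
  push_cast
  linear_combination (k : ZMod (e + 3)) * period

-- The cycle has `n = e + 3` generators; this keeps `n ≥ 3` and the block length `n - 1 = e + 2`
-- free of truncated subtraction.
theorem semiconjBy_cyclicProd_of_braid_of_commute {M : Type*} [Monoid M] {e : ℕ}
    {x : ZMod (e + 3) → M} {s : ZMod (e + 3)} (k : ℕ)
    (braid : ∀ i < k, x (s - i) * x (s - i + 1) * x (s - i) =
      x (s - i + 1) * x (s - i) * x (s - i + 1))
    (comm : ∀ i < k, ∀ j < e, Commute (x (s - i)) (x (s - i + 2 + j))) :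
    SemiconjBy (cyclicProd x s (k * (e + 2))) (x (s - k + 1)) (x (s + 1)) := by
  induction k with
  | zero => simp [cyclicProd_zero]
  | succ k ih =>
    have earlier_blocks_semiconj := ih (fun i hi => braid i (by lia)) (fun i hi => comm i (by lia))
    have block_start : s + (k * (e + 2) : ℕ) = s - k := by
      rw [natCast_mul_add_two_eq_neg, sub_eq_add_neg]
    have block_eq : cyclicProd x (s - k) (e + 2) =
        x (s - k) * x (s - k + 1) * cyclicProd x (s - k + 2) e := by
      rw [cyclicProd_succ', cyclicProd_succ', add_assoc _ 1 1, one_add_one_eq_two, mul_assoc]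
    have block_semiconj : SemiconjBy (cyclicProd x (s - k) (e + 2)) (x (s - k)) (x (s - k + 1)) :=
      block_eq ▸ semiconjBy_mul_mul_of_braid_of_commute (braid k k.lt_succ_self)
        (commute_cyclicProd (comm k k.lt_succ_self))
    rw [Nat.succ_mul, cyclicProd_add, block_start, Nat.cast_succ, ← sub_sub, sub_add_cancel]
    exact earlier_blocks_semiconj.mul_left block_semiconj

theorem CyclicRel.succ_of_semiconjBy {M : Type*} [LeftCancelMonoid M] {n m : ℕ} {x : ZMod n → M}
    {s : ZMod n} (semiconj : SemiconjBy (cyclicProd x s m) (x (s + 1 + m)) (x (s + 1)))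
    (rel : CyclicRel m x s) : CyclicRel m x (s + 1) := by
  refine mul_left_cancel (a := x (s + 1)) ?_
  calc x (s + 1) * cyclicProd x (s + 1) m
      = x (s + 1) * cyclicProd x s m := by rw [rel]
    _ = cyclicProd x s m * x (s + 1 + m) := semiconj.eq.symm
    _ = cyclicProd x (s + 1) m * x (s + 1 + m) := by rw [rel]
    _ = x (s + 1) * cyclicProd x (s + 1 + 1) m := by rw [← cyclicProd_succ, cyclicProd_succ']

theorem CyclicRel.succ_of_braid_of_commute {M : Type*} [LeftCancelMonoid M] {e k : ℕ}
    {x : ZMod (e + 3) → M} {s : ZMod (e + 3)}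
    (braid : ∀ i < k, x (s - i) * x (s - i + 1) * x (s - i) =
      x (s - i + 1) * x (s - i) * x (s - i + 1))
    (comm : ∀ i < k, ∀ j < e, Commute (x (s - i)) (x (s - i + 2 + j)))
    (rel : CyclicRel (k * (e + 2)) x s) : CyclicRel (k * (e + 2)) x (s + 1) := by
  have last_index : s + 1 + (k * (e + 2) : ℕ) = s - k + 1 := by
    rw [natCast_mul_add_two_eq_neg, add_right_comm, sub_eq_add_neg]
  exact rel.succ_of_semiconjBy
    (last_index ▸ semiconjBy_cyclicProd_of_braid_of_commute k braid comm)

theorem rel9_cyclic_affine_A3_general {M : Type*} [LeftCancelMonoid M] (x y z w : M)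
    (hxy : x * y * x = y * x * y)
    (hzw : z * w * z = w * z * w)
    (hwx : w * x * w = x * w * x)
    (hxz : x * z = z * x)
    (hyw : y * w = w * y)
    (h : x * y * z * w * x * y * z * w * x = y * z * w * x * y * z * w * x * y) :
    y * z * w * x * y * z * w * x * y = z * w * x * y * z * w * x * y * z := by
  let v : ZMod (1 + 3) → M := ![x, y, z, w]
  have cyclicProd_nine (s : ZMod (1 + 3)) : cyclicProd v s (3 * (1 + 2)) =
      v s * v (s + 1) * v (s + 2) * v (s + 3) * v (s + 4) * v (s + 5) * v (s + 6) * v (s + 7) *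
        v (s + 8) := by
    simp [cyclicProd, List.range_succ, mul_assoc]
  -- From here on, indices such as `0 - 1` or `2 + 7` reduce modulo 4 by definitional unfolding.
  have braid : ∀ i < 3, v (0 - (i : ℕ)) * v (0 - i + 1) * v (0 - i) =
      v (0 - i + 1) * v (0 - i) * v (0 - i + 1) := by
    intro i hi
    interval_cases i
    exacts [hxy, hwx, hzw]
  have comm : ∀ i < 3, ∀ j < 1, Commute (v (0 - (i : ℕ))) (v (0 - i + 2 + (j : ℕ))) := by
    intro i hi j hj
    interval_cases i <;> interval_cases j
    exacts [hxz, hyw.symm, hxz.symm]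
  have rel_zero : CyclicRel (3 * (1 + 2)) v 0 :=
    (cyclicProd_nine 0).trans (h.trans (cyclicProd_nine 1).symm)
  have rel_one := rel_zero.succ_of_braid_of_commute braid comm
  exact (cyclicProd_nine 1).symm.trans (rel_one.trans (cyclicProd_nine 2))

/- The relation rel_9(x,y,z,w) is cyclic in Cox(Ã₃, ∞): given the affine A₃
   Coxeter relations, xyzwxyzwx = yzwxyzwxy implies yzwxyzwxy = zwxyzwxyz. -/

theorem rel9_cyclic_affine_A3
    {G : Type*} [Group G] (x y z w : G)
    (hxy : x * y * x = y * x * y)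
    (hyz : y * z * y = z * y * z)
    (hzw : z * w * z = w * z * w)
    (hwx : w * x * w = x * w * x)
    (hxz : x * z = z * x)
    (hyw : y * w = w * y)
    (h : x * y * z * w * x * y * z * w * x = y * z * w * x * y * z * w * x * y) :
    y * z * w * x * y * z * w * x * y = z * w * x * y * z * w * x * y * z :=
  rel9_cyclic_affine_A3_general x y z w hxy hzw hwx hxz hyw h
end

section
/- Let x, y, z, w be elements of a group G satisfying the affine A_3 Coxeter relations: xyx = yxy, yzy = zyz, zwz = wzw, wxw = xwx, xz = zx, yw = wy. Then the relation rel_9(x,y,z,w), i.e. xyzwxyzwx = yzwxyzwxy, holds if and only if (xy)z(xy)⁻¹ braids with w. -/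
section Group

variable {G : Type*} [Group G]

theorem braids_iff_conj_eq_conj_inv {a b : G} :
    Braids a b ↔ MulAut.conj a b = MulAut.conj b⁻¹ a := by
  rw [Braids, MulAut.conj_apply, MulAut.conj_apply, inv_inv, mul_inv_eq_iff_eq_mul,
    mul_assoc b⁻¹, mul_assoc b⁻¹, eq_inv_mul_iff_mul_eq, eq_comm]
  simp only [mul_assoc]

theorem Braids.conj_mul_eq_conj_inv_mul {a b c : G} (hab : Braids a b) (hbc : Braids b c)
    (hac : Commute a c) : MulAut.conj (a * b) c = MulAut.conj (b * c)⁻¹ a :=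
  calc MulAut.conj (a * b) c
    _ = MulAut.conj a (MulAut.conj b c) := by rw [map_mul, MulAut.mul_apply]
    _ = MulAut.conj a (MulAut.conj c⁻¹ b) := by rw [braids_iff_conj_eq_conj_inv.mp hbc]
    _ = MulAut.conj c⁻¹ (MulAut.conj a b) := by
      simp only [← MulAut.mul_apply, ← map_mul, hac.inv_right.eq]
    _ = MulAut.conj c⁻¹ (MulAut.conj b⁻¹ a) := by rw [braids_iff_conj_eq_conj_inv.mp hab]
    _ = MulAut.conj (b * c)⁻¹ a := by rw [mul_inv_rev, map_mul, MulAut.mul_apply]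

/-- For `u = x₁⋯x_{k-1}` and `y = x₁`, the left-hand side is `rel_{kn+1}(x, x₁, …, x_{k-1})`. -/
theorem pow_mul_eq_pow_mul_iff_conj (x u y : G) (n : ℕ) :
    (x * u) ^ n * x = (u * x) ^ n * y ↔
      MulAut.conj ((x * u) ^ n) (MulAut.conj x y) = x := by
  have rotate : x * (u * x) ^ n = (x * u) ^ n * x := (mul_pow_mul x u n).symm
  calc (x * u) ^ n * x = (u * x) ^ n * y
    _ ↔ x * ((x * u) ^ n * x) = (x * u) ^ n * x * y := by
      rw [← rotate, mul_assoc x _ y, mul_right_inj, rotate]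
    _ ↔ MulAut.conj ((x * u) ^ n) (MulAut.conj x y) = x := by
      rw [eq_comm, MulAut.conj_apply, MulAut.conj_apply, mul_inv_eq_iff_eq_mul,
        ← mul_assoc ((x * u) ^ n), mul_inv_eq_iff_eq_mul]
      simp only [mul_assoc]

theorem conj_mul_conj_eq_conj_conj {x y w : G} (hwx : Braids w x) (hxy : Braids x y)
    (hyw : Commute y w) (z : G) :
    MulAut.conj (x * y * z * w) (MulAut.conj x y) = MulAut.conj (MulAut.conj (x * y) z) w :=
  calc MulAut.conj (x * y * z * w) (MulAut.conj x y)
    _ = MulAut.conj (x * y * z) (MulAut.conj (w * x) y) := by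
      simp only [map_mul, MulAut.mul_apply]
    _ = MulAut.conj (x * y * z) (MulAut.conj (x * y)⁻¹ w) := by
      rw [hwx.conj_mul_eq_conj_inv_mul hxy hyw.symm]
    _ = MulAut.conj (MulAut.conj (x * y) z) w := by
      rw [← MulAut.mul_apply, ← map_mul, MulAut.conj_apply (x * y) z]

theorem conj_mul_conj_inv_conj_eq {x y z : G} (hxy : Braids x y) (hyz : Braids y z)
    (hxz : Commute x z) (w : G) :
    MulAut.conj (x * y * z * w) (MulAut.conj w⁻¹ (MulAut.conj (x * y) z)) = x := by
  rw [hxy.conj_mul_eq_conj_inv_mul hyz hxz, MulAut.conj_apply, MulAut.conj_apply,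
    MulAut.conj_apply]
  group

theorem rel9_characterization_general {x y z w : G} (hxy : Braids x y) (hyz : Braids y z)
    (hwx : Braids w x) (hxz : Commute x z) (hyw : Commute y w) :
    x * y * z * w * x * y * z * w * x = y * z * w * x * y * z * w * x * y ↔
      Braids (MulAut.conj (x * y) z) w := by
  set a := MulAut.conj (x * y) z
  set δ := x * y * z * w
  calc x * y * z * w * x * y * z * w * x = y * z * w * x * y * z * w * x * y
    _ ↔ (x * (y * z * w)) ^ 2 * x = (y * z * w * x) ^ 2 * y := by
      simp only [pow_two, mul_assoc]
    _ ↔ MulAut.conj ((x * (y * z * w)) ^ 2) (MulAut.conj x y) = x :=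
      pow_mul_eq_pow_mul_iff_conj x (y * z * w) y 2
    _ ↔ MulAut.conj δ (MulAut.conj δ (MulAut.conj x y)) = x := by
      rw [← mul_assoc, ← mul_assoc, pow_two, map_mul, MulAut.mul_apply]
    _ ↔ MulAut.conj δ (MulAut.conj a w) = MulAut.conj δ (MulAut.conj w⁻¹ a) := by
      rw [conj_mul_conj_eq_conj_conj hwx hxy hyw, conj_mul_conj_inv_conj_eq hxy hyz hxz]
    _ ↔ MulAut.conj a w = MulAut.conj w⁻¹ a := (MulAut.conj δ).injective.eq_iff
    _ ↔ Braids a w := braids_iff_conj_eq_conj_inv.symm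

end Group

theorem rel9_characterization
    {G : Type*} [Group G] (x y z w : G)
    (hxy : x * y * x = y * x * y)
    (hyz : y * z * y = z * y * z)
    (hzw : z * w * z = w * z * w)
    (hwx : w * x * w = x * w * x)
    (hxz : x * z = z * x)
    (hyw : y * w = w * y) :
    (x * y * z * w * x * y * z * w * x = y * z * w * x * y * z * w * x * y) ↔
      ((x * y) * z * (x * y)⁻¹) * w * ((x * y) * z * (x * y)⁻¹) =
        w * ((x * y) * z * (x * y)⁻¹) * w :=
  rel9_characterization_general hxy hyz hwx hxz hyw
end

section
/- Let B₃₃ be the group presented by generators a_1,…,a_5 and relations: braids a_1a_2a_1 = a_2a_1a_2, a_2a_3a_2 = a_3a_2a_3, a_2a_4a_2 = a_4a_2a_4, a_3a_4a_3 = a_4a_3a_4, a_3a_5a_3 = a_5a_3a_5, a_4a_5a_4 = a_5a_4a_5, a_1a_5a_1 = a_5a_1a_5; commutations a_1a_3 = a_3a_1, a_1a_4 = a_4a_1, a_2a_5 = a_5a_2; and the cycle relations rel_4(a_2,a_3,a_4): a_2a_3a_4a_2 = a_3a_4a_2a_3, rel_4(a_3,a_4,a_5): a_3a_4a_5a_3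 = a_4a_5a_3a_4, and rel_9(a_3,a_2,a_1,a_5): a_3a_2a_1a_5a_3a_2a_1a_5a_3 = a_2a_1a_5a_3a_2a_1a_5a_3a_2. Let B'₃₃ be the group presented by generators s,t,u,v,w and relations: braids sts = tst, tut = utu, uvu = vuv, twt = wtw, uwu = wuw; commutations su = us, sv = vs, sw = ws, tv = vt, vw = wv; and rel_6(t,u,w): tuwtuw = uwtuwt (the known presentation of the braid group of the unitary reflection group G₃₃). Then the assignment s ↦ a_1, t ↦ a_2, u ↦ a_3, v ↦ a_3a_4a_3⁻¹, w ↦ (a_2a_1)a_5(a_2a_1)⁻¹ extends to a group isomorphism from B'₃₃ onto B₃₃. -/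
/- The new presentation B₃₃ (on the diagram D₃₃) and the known presentation
   B'₃₃ of the braid group of the unitary reflection group G₃₃ are equivalent:
   s ↦ a₁, t ↦ a₂, u ↦ a₃, v ↦ a₃a₄a₃⁻¹, w ↦ (a₂a₁)a₅(a₂a₁)⁻¹ extends to an
   isomorphism B'₃₃ ≃ B₃₃.  Generators a₁,…,a₅ are indexed by 0,…,4, and
   likewise s,t,u,v,w by 0,…,4. -/

namespace G33Presentation

/-- `a i` is the free group generator corresponding to `a_{i+1}`. -/
def a (i : Fin 5) : FreeGroup (Fin 5) := FreeGroup.of i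

/-- Relations of the presentation `B₃₃` on the diagram `D₃₃`. -/
def rels33 : Set (FreeGroup (Fin 5)) :=
  { a 0 * a 1 * a 0 * (a 1 * a 0 * a 1)⁻¹,
    a 1 * a 2 * a 1 * (a 2 * a 1 * a 2)⁻¹,
    a 1 * a 3 * a 1 * (a 3 * a 1 * a 3)⁻¹,
    a 2 * a 3 * a 2 * (a 3 * a 2 * a 3)⁻¹,
    a 2 * a 4 * a 2 * (a 4 * a 2 * a 4)⁻¹,
    a 3 * a 4 * a 3 * (a 4 * a 3 * a 4)⁻¹,
    a 0 * a 4 * a 0 * (a 4 * a 0 * a 4)⁻¹,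
    a 0 * a 2 * (a 2 * a 0)⁻¹,
    a 0 * a 3 * (a 3 * a 0)⁻¹,
    a 1 * a 4 * (a 4 * a 1)⁻¹,
    a 1 * a 2 * a 3 * a 1 * (a 2 * a 3 * a 1 * a 2)⁻¹,
    a 2 * a 3 * a 4 * a 2 * (a 3 * a 4 * a 2 * a 3)⁻¹,
    a 2 * a 1 * a 0 * a 4 * a 2 * a 1 * a 0 * a 4 * a 2 *
      (a 1 * a 0 * a 4 * a 2 * a 1 * a 0 * a 4 * a 2 * a 1)⁻¹ }

/-- `b 0,…,b 4` are the free group generators `s, t, u, v, w`. -/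
def b (i : Fin 5) : FreeGroup (Fin 5) := FreeGroup.of i

/-- Relations of the known presentation `B'₃₃` of `Braid(G₃₃)`. -/
def rels33' : Set (FreeGroup (Fin 5)) :=
  { b 0 * b 1 * b 0 * (b 1 * b 0 * b 1)⁻¹,
    b 1 * b 2 * b 1 * (b 2 * b 1 * b 2)⁻¹,
    b 2 * b 3 * b 2 * (b 3 * b 2 * b 3)⁻¹,
    b 1 * b 4 * b 1 * (b 4 * b 1 * b 4)⁻¹,
    b 2 * b 4 * b 2 * (b 4 * b 2 * b 4)⁻¹,
    b 0 * b 2 * (b 2 * b 0)⁻¹,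
    b 0 * b 3 * (b 3 * b 0)⁻¹,
    b 0 * b 4 * (b 4 * b 0)⁻¹,
    b 1 * b 3 * (b 3 * b 1)⁻¹,
    b 3 * b 4 * (b 4 * b 3)⁻¹,
    b 1 * b 2 * b 4 * b 1 * b 2 * b 4 * (b 2 * b 4 * b 1 * b 2 * b 4 * b 1)⁻¹ }

/-- `A i` is the image of `a i` in `B₃₃`. -/
def A (i : Fin 5) : PresentedGroup rels33 := PresentedGroup.of i

/-!
Conjugation preserves braid and commutation relations, which translates most relations of either
presentation into relations of the other. The exceptions are `rel_6` and `rel_9`. Put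
`x = a₁a₅a₁⁻¹ = t⁻¹wt` and `δ = wt = tx`; modulo the other relations, `rel_9` says that
`uδuδ = δuδu`, and `rel_6` is a cyclic rotation of this. If `u` braids with both factors of a
factorization `δ = pq`, then `uδuδ = δuδu` holds exactly when `u` braids with `pqp⁻¹`. This
conjugate is `x` for `δ = wt` and `w` for `δ = tx`, so in the presence of `uδuδ = δuδu` the element
`u` braids with `x` if and only if it braids with `w`.
-/

section Braids

variable {M : Type*}

/-- `x` and `y` satisfy the braid relation of length three: they braid. -/
def Braids [Mul M] (x y : M) : Prop := x * y * x = y * x * y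

/-- `x` and `y` satisfy the braid relation of length four. The relation `rel_6(t, u, w)` is
`BraidsFour t (u * w)`. -/
def BraidsFour [Mul M] (x y : M) : Prop := x * y * x * y = y * x * y * x

theorem braids_comm [Mul M] {x y : M} : Braids x y ↔ Braids y x := eq_comm

theorem Braids.symm [Mul M] {x y : M} (h : Braids x y) : Braids y x := braids_comm.1 h

variable [Semigroup M] {g x x' y y' z : M}

theorem Braids.semiconjBy_mul (h : Braids x y) : SemiconjBy (y * x) y x := by
  simpa only [Braids, SemiconjBy, mul_assoc] using h.symm

theorem Braids.semiconjBy_mul_mul (h : Braids x y) : SemiconjBy (x * y * x) x y :=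
  calc x * y * x * x = y * x * y * x := by rw [h]
    _ = y * (x * y * x) := by simp only [mul_assoc]

variable [IsCancelMul M]

theorem commute_iff_of_semiconjBy (hx : SemiconjBy g x x') (hy : SemiconjBy g y y') :
    Commute x y ↔ Commute x' y' := by
  rw [commute_iff_eq, ← mul_right_inj g, hx.mul_right hy, hy.mul_right hx, mul_left_inj,
    commute_iff_eq]

theorem braids_iff_of_semiconjBy (hx : SemiconjBy g x x') (hy : SemiconjBy g y y') :
    Braids x y ↔ Braids x' y' := by
  rw [Braids, ← mul_right_inj g, (hx.mul_right hy).mul_right hx, (hy.mul_right hx).mul_right hy,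
    mul_left_inj, Braids]

theorem Braids.semiconjBy_rotate (h : Braids x y) (hz : SemiconjBy x y z) :
    SemiconjBy y z x := by
  refine mul_right_cancel (b := x) ?_
  calc y * z * x = y * x * y := by rw [mul_assoc, ← hz.eq, mul_assoc]
    _ = x * y * x := h.symm

theorem Braids.semiconjBy_rotate_rotate (h : Braids x y) (hz : SemiconjBy x y z) :
    SemiconjBy z x y :=
  hz.eq.symm.trans (h.semiconjBy_rotate hz).eq.symm

end Braids

section CycleRelations

variable {M : Type*} [Semigroup M] [IsCancelMul M] {p q r s t u v w z : M}

theorem rel_four_iff_commute_first (hpq : Braids p q) (hv : SemiconjBy q r v) :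
    p * q * r * p = q * r * p * q ↔ Commute p v := by
  have left_eq : p * q * r * p = p * v * (q * p) := by
    calc p * q * r * p = p * (q * r) * p := by simp only [mul_assoc]
      _ = p * v * (q * p) := by rw [hv.eq]; simp only [mul_assoc]
  have right_eq : q * r * p * q = v * p * (q * p) := by
    calc q * r * p * q = v * (q * p * q) := by rw [hv.eq]; simp only [mul_assoc]
      _ = v * p * (q * p) := by rw [← hpq]; simp only [mul_assoc]
  rw [left_eq, right_eq, mul_left_inj, commute_iff_eq]

theorem rel_four_iff_commute_last (hpq : Braids p q) (hv : SemiconjBy p q v) :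
    p * q * r * p = q * r * p * q ↔ Commute v r := by
  have left_eq : p * q * r * p = q * (v * r) * p := by
    rw [← (hpq.semiconjBy_rotate hv).eq, mul_assoc q]
  have right_eq : q * r * p * q = q * (r * v) * p := by
    calc q * r * p * q = q * r * (p * q) := by simp only [mul_assoc]
      _ = q * (r * v) * p := by rw [hv.eq]; simp only [mul_assoc]
  rw [left_eq, right_eq, mul_left_inj, mul_right_inj, commute_iff_eq]

theorem braidsFour_mul_iff (hup : Braids u p) (huq : Braids u q) (hr : SemiconjBy p q r) :
    BraidsFour u (p * q) ↔ Braids u r := by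
  have left_eq : u * r * u * (p * u * q) = u * (p * q) * u * (p * q) := by
    calc u * r * u * (p * u * q) = u * r * (u * p * u) * q := by simp only [mul_assoc]
      _ = u * (r * p) * u * (p * q) := by rw [hup]; simp only [mul_assoc]
      _ = u * (p * q) * u * (p * q) := by rw [hr.eq]
  have right_eq : r * u * r * (p * u * q) = p * q * u * (p * q) * u := by
    calc r * u * r * (p * u * q) = r * u * (r * p) * u * q := by simp only [mul_assoc]
      _ = r * u * p * (q * u * q) := by rw [← hr.eq]; simp only [mul_assoc]
      _ = r * (u * p * u) * q * u := by rw [← huq]; simp only [mul_assoc]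
      _ = r * p * u * (p * q) * u := by rw [hup]; simp only [mul_assoc]
      _ = p * q * u * (p * q) * u := by rw [hr.eq]
  rw [BraidsFour, Braids, ← left_eq, ← right_eq, mul_left_inj]

theorem Braids.commute_iff_of_semiconjBy_mul (hst : Braids s t) (hw : SemiconjBy (t * s) z w) :
    Commute t z ↔ Commute s w :=
  commute_iff_of_semiconjBy hst.semiconjBy_mul hw

theorem Braids.braids_iff_of_semiconjBy_mul (hst : Braids s t) (hsw : Commute s w)
    (hw : SemiconjBy (t * s) z w) : Braids s z ↔ Braids t w := by
  have hz : SemiconjBy (s * t * s) z w := by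
    rw [mul_assoc]
    exact SemiconjBy.mul_left hsw hw
  exact braids_iff_of_semiconjBy hst.semiconjBy_mul_mul hz

theorem rel_nine_iff_braidsFour (hst : Braids s t) (htu : Braids t u) (hsu : Commute s u)
    (hsw : Commute s w) (hw : SemiconjBy (t * s) z w) :
    u * t * s * z * u * t * s * z * u = t * s * z * u * t * s * z * u * t ↔
      BraidsFour u (w * t) := by
  have common_eq : w * t * s * u * (w * t * s) = w * t * u * w * t * (s * t) := by
    calc w * t * s * u * (w * t * s) = w * t * (s * u) * w * t * s := by simp only [mul_assoc]
      _ = w * t * u * (s * w) * t * s := by rw [hsu.eq]; simp only [mul_assoc]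
      _ = w * t * u * w * (s * t * s) := by rw [hsw.eq]; simp only [mul_assoc]
      _ = w * t * u * w * t * (s * t) := by rw [hst]; simp only [mul_assoc]
  have left_eq : u * t * s * z * u * t * s * z * u = u * (w * t) * u * (w * t) * (s * t * u) := by
    calc u * t * s * z * u * t * s * z * u
      _ = u * (t * s * z) * u * (t * s * z) * u := by simp only [mul_assoc]
      _ = u * (w * t * s * u * (w * t * s)) * u := by rw [hw.eq]; simp only [mul_assoc]
      _ = u * (w * t) * u * (w * t) * (s * t * u) := by rw [common_eq]; simp only [mul_assoc]
  have right_eq : t * s * z * u * t * s * z * u * t = w * t * u * (w * t) * u * (s * t * u) := by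
    calc t * s * z * u * t * s * z * u * t
      _ = t * s * z * u * (t * s * z) * u * t := by simp only [mul_assoc]
      _ = w * t * s * u * (w * t * s) * u * t := by rw [hw.eq]; simp only [mul_assoc]
      _ = w * t * u * w * t * s * (t * u * t) := by rw [common_eq]; simp only [mul_assoc]
      _ = w * t * u * w * t * (s * u) * t * u := by rw [htu]; simp only [mul_assoc]
      _ = w * t * u * (w * t) * u * (s * t * u) := by rw [hsu.eq]; simp only [mul_assoc]
  rw [left_eq, right_eq, mul_left_inj, BraidsFour]

end CycleRelations

section Group

variable {G : Type*} [Group G]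

theorem braidsFour_mul_rotate {t u w : G} (htu : Braids t u) (htw : Braids t w)
    (huw : Braids u w) : BraidsFour t (u * w) ↔ BraidsFour u (w * t) := by
  have hy := SemiconjBy.conj_mk u w
  have hr := SemiconjBy.conj_mk w t
  calc BraidsFour t (u * w) ↔ Braids t (u * w * u⁻¹) := braidsFour_mul_iff htu htw hy
    _ ↔ Braids (w * t * w⁻¹) u := braids_iff_of_semiconjBy hr (huw.semiconjBy_rotate hy)
    _ ↔ Braids u (w * t * w⁻¹) := braids_comm
    _ ↔ BraidsFour u (w * t) := (braidsFour_mul_iff huw htu.symm hr).symm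

theorem braids_and_braidsFour_iff {t u w x : G} (htu : Braids t u) (htw : Braids t w)
    (hx : SemiconjBy t x w) :
    Braids u x ∧ BraidsFour u (w * t) ↔ Braids u w ∧ BraidsFour t (u * w) := by
  have htx : Braids t x := (braids_iff_of_semiconjBy (Commute.refl t) hx).2 htw
  have four_iff_of_x (hux : Braids u x) : BraidsFour u (w * t) ↔ Braids u w := by
    rw [← hx.eq]
    exact braidsFour_mul_iff htu.symm hux hx
  have four_iff_of_w (huw : Braids u w) : BraidsFour u (w * t) ↔ Braids u x :=
    braidsFour_mul_iff huw htu.symm (htx.semiconjBy_rotate_rotate hx)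
  constructor
  · rintro ⟨hux, four⟩
    have huw : Braids u w := (four_iff_of_x hux).1 four
    exact ⟨huw, (braidsFour_mul_rotate htu htw huw).2 four⟩
  · rintro ⟨huw, four⟩
    have four' : BraidsFour u (w * t) := (braidsFour_mul_rotate htu htw huw).1 four
    exact ⟨(four_iff_of_w huw).1 four', four'⟩

/-- The relations of `B₃₃` hold for the elements `a₁, …, a₅` of a group: these
are the tuples to which homomorphisms from `B₃₃` send its generators. -/
structure SatisfiesB33 (a₁ a₂ a₃ a₄ a₅ : G) : Prop where
  braids₁₂ : Braids a₁ a₂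
  braids₂₃ : Braids a₂ a₃
  braids₂₄ : Braids a₂ a₄
  braids₃₄ : Braids a₃ a₄
  braids₃₅ : Braids a₃ a₅
  braids₄₅ : Braids a₄ a₅
  braids₁₅ : Braids a₁ a₅
  commute₁₃ : Commute a₁ a₃
  commute₁₄ : Commute a₁ a₄
  commute₂₅ : Commute a₂ a₅
  rel_four₂₃₄ : a₂ * a₃ * a₄ * a₂ = a₃ * a₄ * a₂ * a₃
  rel_four₃₄₅ : a₃ * a₄ * a₅ * a₃ = a₄ * a₅ * a₃ * a₄
  rel_nine : a₃ * a₂ * a₁ * a₅ * a₃ * a₂ * a₁ * a₅ * a₃ =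
    a₂ * a₁ * a₅ * a₃ * a₂ * a₁ * a₅ * a₃ * a₂

/-- The relations of `B'₃₃` hold for the elements `s, t, u, v, w` of a group: these
are the tuples to which homomorphisms from `B'₃₃` send its generators. -/
structure SatisfiesB33' (s t u v w : G) : Prop where
  braids_st : Braids s t
  braids_tu : Braids t u
  braids_uv : Braids u v
  braids_tw : Braids t w
  braids_uw : Braids u w
  commute_su : Commute s u
  commute_sv : Commute s v
  commute_sw : Commute s w
  commute_tv : Commute t v
  commute_vw : Commute v w
  rel_six : BraidsFour t (u * w)

section Translation

variable {s t u v w p z : G}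

theorem braids_and_rel_nine_iff (hst : Braids s t) (htu : Braids t u) (hsu : Commute s u)
    (hsw : Commute s w) (htw : Braids t w) (hw : SemiconjBy (t * s) z w) :
    (Braids u z ∧ u * t * s * z * u * t * s * z * u = t * s * z * u * t * s * z * u * t) ↔
      Braids u w ∧ BraidsFour t (u * w) := by
  have hx := SemiconjBy.conj_mk s z
  have hxw : SemiconjBy t (s * z * s⁻¹) w :=
    calc t * (s * z * s⁻¹) = t * s * z * s⁻¹ := by simp only [mul_assoc]
      _ = w * t := by rw [hw.eq, ← mul_assoc, mul_inv_cancel_right]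
  rw [rel_nine_iff_braidsFour hst htu hsu hsw hw, braids_iff_of_semiconjBy hsu hx,
    braids_and_braidsFour_iff htu htw hxw]

theorem SatisfiesB33.satisfiesB33' (hv : SemiconjBy u p v) (hw : SemiconjBy (t * s) z w)
    (h : SatisfiesB33 s t u p z) : SatisfiesB33' s t u v w := by
  have hsw : Commute s w := (h.braids₁₂.commute_iff_of_semiconjBy_mul hw).1 h.commute₂₅
  have htw : Braids t w := (h.braids₁₂.braids_iff_of_semiconjBy_mul hsw hw).1 h.braids₁₅
  obtain ⟨huw, six⟩ := (braids_and_rel_nine_iff h.braids₁₂ h.braids₂₃ h.commute₁₃ hsw htw hw).1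
    ⟨h.braids₃₅, h.rel_nine⟩
  have hsv : Commute s v := (commute_iff_of_semiconjBy h.commute₁₃.symm hv).1 h.commute₁₄
  have htv : Commute t v := (rel_four_iff_commute_first h.braids₂₃ hv).1 h.rel_four₂₃₄
  have hvz : Commute v z := (rel_four_iff_commute_last h.braids₃₄ hv).1 h.rel_four₃₄₅
  exact
  { braids_st := h.braids₁₂
    braids_tu := h.braids₂₃
    braids_uv := (braids_iff_of_semiconjBy (Commute.refl u) hv).1 h.braids₃₄
    braids_tw := htw
    braids_uw := huw
    commute_su := h.commute₁₃
    commute_sv := hsv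
    commute_sw := hsw
    commute_tv := htv
    commute_vw := (commute_iff_of_semiconjBy (htv.mul_left hsv) hw).1 hvz
    rel_six := six }

theorem SatisfiesB33'.satisfiesB33 (hv : SemiconjBy u p v) (hw : SemiconjBy (t * s) z w)
    (h : SatisfiesB33' s t u v w) : SatisfiesB33 s t u p z := by
  have hup : Braids u p := (braids_iff_of_semiconjBy (Commute.refl u) hv).2 h.braids_uv
  obtain ⟨huz, nine⟩ := (braids_and_rel_nine_iff h.braids_st h.braids_tu h.commute_su h.commute_sw
    h.braids_tw hw).2 ⟨h.braids_uw, h.rel_six⟩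
  have hvz : Commute v z :=
    (commute_iff_of_semiconjBy (h.commute_tv.mul_left h.commute_sv) hw).2 h.commute_vw
  have hvup : SemiconjBy v u p := hup.semiconjBy_rotate_rotate hv
  exact
  { braids₁₂ := h.braids_st
    braids₂₃ := h.braids_tu
    braids₂₄ := (braids_iff_of_semiconjBy h.commute_tv.symm hvup).1 h.braids_tu
    braids₃₄ := hup
    braids₃₅ := huz
    braids₄₅ := (braids_iff_of_semiconjBy hvup hvz).1 huz
    braids₁₅ := (h.braids_st.braids_iff_of_semiconjBy_mul h.commute_sw hw).2 h.braids_tw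
    commute₁₃ := h.commute_su
    commute₁₄ := (commute_iff_of_semiconjBy h.commute_su.symm hv).2 h.commute_sv
    commute₂₅ := (h.braids_st.commute_iff_of_semiconjBy_mul hw).2 h.commute_sw
    rel_four₂₃₄ := (rel_four_iff_commute_first h.braids_tu hv).2 h.commute_tv
    rel_four₃₄₅ := (rel_four_iff_commute_last hup hv).2 hvz
    rel_nine := nine }

theorem satisfiesB33_iff (hv : SemiconjBy u p v) (hw : SemiconjBy (t * s) z w) :
    SatisfiesB33 s t u p z ↔ SatisfiesB33' s t u v w :=
  ⟨fun h => h.satisfiesB33' hv hw, fun h => h.satisfiesB33 hv hw⟩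

end Translation

theorem map_rels33_eq_one_iff (f : FreeGroup (Fin 5) →* G) :
    (∀ r ∈ rels33, f r = 1) ↔ SatisfiesB33 (f (a 0)) (f (a 1)) (f (a 2)) (f (a 3)) (f (a 4)) := by
  simp only [rels33, Set.forall_mem_insert, Set.mem_singleton_iff, forall_eq, map_mul, map_inv,
    mul_inv_eq_one]
  constructor
  · rintro ⟨h₁₂, h₂₃, h₂₄, h₃₄, h₃₅, h₄₅, h₁₅, c₁₃, c₁₄, c₂₅, r₂₃₄, r₃₄₅, r₉⟩
    exact ⟨h₁₂, h₂₃, h₂₄, h₃₄, h₃₅, h₄₅, h₁₅, c₁₃, c₁₄, c₂₅, r₂₃₄, r₃₄₅, r₉⟩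
  · rintro ⟨h₁₂, h₂₃, h₂₄, h₃₄, h₃₅, h₄₅, h₁₅, c₁₃, c₁₄, c₂₅, r₂₃₄, r₃₄₅, r₉⟩
    exact ⟨h₁₂, h₂₃, h₂₄, h₃₄, h₃₅, h₄₅, h₁₅, c₁₃, c₁₄, c₂₅, r₂₃₄, r₃₄₅, r₉⟩

theorem map_rels33'_eq_one_iff (f : FreeGroup (Fin 5) →* G) :
    (∀ r ∈ rels33', f r = 1) ↔
      SatisfiesB33' (f (b 0)) (f (b 1)) (f (b 2)) (f (b 3)) (f (b 4)) := by
  have rel_six_iff (t u w : G) :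
      t * u * w * t * u * w = u * w * t * u * w * t ↔ BraidsFour t (u * w) := by
    simp only [BraidsFour, mul_assoc]
  simp only [rels33', Set.forall_mem_insert, Set.mem_singleton_iff, forall_eq, map_mul, map_inv,
    mul_inv_eq_one, rel_six_iff]
  constructor
  · rintro ⟨hst, htu, huv, htw, huw, hsu, hsv, hsw, htv, hvw, six⟩
    exact ⟨hst, htu, huv, htw, huw, hsu, hsv, hsw, htv, hvw, six⟩
  · rintro ⟨hst, htu, huv, htw, huw, hsu, hsv, hsw, htv, hvw, six⟩
    exact ⟨hst, htu, huv, htw, huw, hsu, hsv, hsw, htv, hvw, six⟩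

end Group

section Presentations

universe u

theorem normalClosure_le_of_forall_hom {F : Type u} [Group F] {S T : Set F}
    (h : ∀ {G : Type u} [Group G] (f : F →* G), (∀ r ∈ T, f r = 1) → ∀ r ∈ S, f r = 1) :
    Subgroup.normalClosure S ≤ Subgroup.normalClosure T := by
  refine Subgroup.normalClosure_le_normal fun r hr => ?_
  rw [SetLike.mem_coe, ← QuotientGroup.eq_one_iff]
  refine h (QuotientGroup.mk' (Subgroup.normalClosure T)) (fun x hx => ?_) r hr
  exact (QuotientGroup.eq_one_iff x).2 (Subgroup.subset_normalClosure hx)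

/-- The automorphism of the free group of rank five sending the generators `s, t, u, v, w` to the
words in `a₁, …, a₅` that the isomorphism `B'₃₃ ≃* B₃₃` prescribes. -/
def generatorChange : FreeGroup (Fin 5) ≃* FreeGroup (Fin 5) :=
  MonoidHom.toMulEquiv
    (FreeGroup.lift ![a 0, a 1, a 2, a 2 * a 3 * (a 2)⁻¹, a 1 * a 0 * a 4 * (a 1 * a 0)⁻¹])
    (FreeGroup.lift ![b 0, b 1, b 2, (b 2)⁻¹ * b 3 * b 2, (b 1 * b 0)⁻¹ * b 4 * (b 1 * b 0)])
    (by ext i; fin_cases i <;> simp [a, b, mul_assoc])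
    (by ext i; fin_cases i <;> simp [a, b, mul_assoc])

theorem map_rels33_eq_one_iff_generatorChange {G : Type*} [Group G] (f : FreeGroup (Fin 5) →* G) :
    (∀ r ∈ rels33, f r = 1) ↔ ∀ r ∈ rels33', f (generatorChange r) = 1 := by
  have hv : SemiconjBy (f (a 2)) (f (a 3)) (f (generatorChange (b 3))) := by
    simpa [generatorChange, b] using SemiconjBy.conj_mk (f (a 2)) (f (a 3))
  have hw : SemiconjBy (f (a 1) * f (a 0)) (f (a 4)) (f (generatorChange (b 4))) := by
    simpa [generatorChange, b] using SemiconjBy.conj_mk (f (a 1) * f (a 0)) (f (a 4))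
  exact (map_rels33_eq_one_iff f).trans <| (satisfiesB33_iff hv hw).trans
    (map_rels33'_eq_one_iff (f.comp generatorChange.toMonoidHom)).symm

theorem map_generatorChange_normalClosure :
    (Subgroup.normalClosure rels33').map generatorChange.toMonoidHom =
      Subgroup.normalClosure rels33 := by
  rw [Subgroup.map_normalClosure _ generatorChange.toMonoidHom generatorChange.surjective]
  apply le_antisymm <;> refine normalClosure_le_of_forall_hom fun f hf => ?_
  · exact Set.forall_mem_image.2 ((map_rels33_eq_one_iff_generatorChange f).1 hf)
  · exact (map_rels33_eq_one_iff_generatorChange f).2 (Set.forall_mem_image.1 hf)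

end Presentations

theorem B33_iso :
    ∃ e : PresentedGroup rels33' ≃* PresentedGroup rels33,
      e (PresentedGroup.of 0) = A 0 ∧
      e (PresentedGroup.of 1) = A 1 ∧
      e (PresentedGroup.of 2) = A 2 ∧
      e (PresentedGroup.of 3) = A 2 * A 3 * (A 2)⁻¹ ∧
      e (PresentedGroup.of 4) = (A 1 * A 0) * A 4 * (A 1 * A 0)⁻¹ := by
  exact ⟨QuotientGroup.congr _ _ generatorChange map_generatorChange_normalClosure,
    rfl, rfl, rfl, rfl, rfl⟩

end G33Presentation
end
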